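/- arXiv:1506.06200 — 2 statements merged into one kernel-verified Lean document; each statement's English description precedes it below -/
import Mathlib

section
/- Let X, Y, Z be smooth projective varieties of dimension n over a field k, and let φ': X ⇢ Y and φ'': Y ⇢ Z be convenient birational isomorphisms. Then the composite birational isomorphism φ'' ∘ φ' : X ⇢ Z is convenient. -/
open AlgebraicGeometry CategoryTheory CategoryTheory.Limits

noncomputable section

universe u

/-- A variety over a field `k`: a reduced separated scheme of finite type over `Spec k`. -/
structure Variety (k : Type u) [Field k] : Type (u + 1) where
  /-- the underlying scheme -/
  toScheme : Scheme.{u}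
  /-- the structure morphism to `Spec k` -/
  str : toScheme ⟶ Spec (CommRingCat.of k)
  reduced : IsReduced toScheme
  separated : IsSeparated str
  locallyOfFiniteType : LocallyOfFiniteType str
  quasiCompact : QuasiCompact str

namespace Variety

variable {k : Type u} [Field k]

/-- The dimension of a variety, i.e. the Krull dimension of its underlying space. -/
def dim (V : Variety k) : WithBot ℕ∞ := topologicalKrullDim V.toScheme

/-- `W` together with (implicitly) its two projections is a product of `X` and `Y`
over `k`, i.e. `W ≅ X ×ₖ Y`. -/
def IsProductOf (W X Y : Variety k) : Prop :=
  ∃ e : W.toScheme ≅ Limits.pullback X.str Y.str,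
    e.hom ≫ Limits.pullback.fst X.str Y.str ≫ X.str = W.str

/-- `A` is the affine line `𝔸¹` over `k`. -/
def IsAffLine (A : Variety k) : Prop :=
  ∃ e : A.toScheme ≅ Spec (CommRingCat.of (Polynomial k)),
    e.hom ≫ Spec.map (CommRingCat.ofHom (algebraMap k (Polynomial k))) = A.str

/-- `A` is affine `r`-space `𝔸^r` over `k`. -/
def IsAffSpace (r : ℕ) (A : Variety k) : Prop :=
  ∃ e : A.toScheme ≅ Spec (CommRingCat.of (MvPolynomial (Fin r) k)),
    e.hom ≫ Spec.map (CommRingCat.ofHom (algebraMap k (MvPolynomial (Fin r) k))) = A.str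

/-- A variety is smooth if its structure morphism is smooth. -/
def IsSmoothVar (V : Variety k) : Prop := IsSmooth V.str

/-- Projective `N`-space over `k`, as the `Proj` of a polynomial ring. -/
def ProjSpace (k : Type u) [Field k] (N : ℕ) : Scheme.{u} :=
  letI := MvPolynomial.gradedAlgebra (σ := Fin (N + 1)) (R := k)
  Proj (MvPolynomial.homogeneousSubmodule (Fin (N + 1)) k)

/-- The structure morphism of projective `N`-space over `k`. -/
def ProjSpace.str (k : Type u) [Field k] (N : ℕ) :
    ProjSpace k N ⟶ Spec (CommRingCat.of k) :=
  letI := MvPolynomial.gradedAlgebra (σ := Fin (N + 1)) (R := k)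
  Proj.toSpecZero (MvPolynomial.homogeneousSubmodule (Fin (N + 1)) k) ≫
    Spec.map (CommRingCat.ofHom
      (algebraMap k (MvPolynomial.homogeneousSubmodule (Fin (N + 1)) k 0)))

/-- `P` is projective `N`-space over `k`, as a variety. -/
def IsProjSpaceVar (N : ℕ) (P : Variety k) : Prop :=
  ∃ e : P.toScheme ≅ ProjSpace k N, e.hom ≫ ProjSpace.str k N = P.str

/-- A variety is projective if it admits a closed immersion into some `ℙ^N` over `k`. -/
def IsProjectiveVar (V : Variety k) : Prop :=
  ∃ (N : ℕ) (i : V.toScheme ⟶ ProjSpace k N),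
    IsClosedImmersion i ∧ i ≫ ProjSpace.str k N = V.str

/-- `X` and `Y` are birationally isomorphic over `k`:
some dense open subvarieties are isomorphic over `k`. -/
def BirEquiv (X Y : Variety k) : Prop :=
  ∃ (U : X.toScheme.Opens) (V : Y.toScheme.Opens),
    Dense (U : Set X.toScheme) ∧ Dense (V : Set Y.toScheme) ∧
    ∃ e : U.toScheme ≅ V.toScheme, e.hom ≫ V.ι ≫ Y.str = U.ι ≫ X.str

/-- `X` and `Y` are stably birational: `X × 𝔸^r` and `Y × 𝔸^r` are birationally
isomorphic for some `r ≥ 0`. -/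
def StablyBirational (X Y : Variety k) : Prop :=
  ∃ (r : ℕ) (A XA YA : Variety k),
    IsAffSpace r A ∧ IsProductOf XA X A ∧ IsProductOf YA Y A ∧ BirEquiv XA YA

/-- `X` and `Y` are piecewise isomorphic: they admit finite partitions into locally
closed subvarieties which are isomorphic over `k` piece by piece. -/
def PiecewiseIso (X Y : Variety k) : Prop :=
  ∃ (m : ℕ) (P Q : Fin m → Variety k)
    (f : ∀ i, (P i).toScheme ⟶ X.toScheme) (g : ∀ i, (Q i).toScheme ⟶ Y.toScheme),
    (∀ i, IsImmersion (f i)) ∧ (∀ i, IsImmersion (g i)) ∧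
    (∀ i, f i ≫ X.str = (P i).str) ∧ (∀ i, g i ≫ Y.str = (Q i).str) ∧
    (∀ i j, i ≠ j → Disjoint (Set.range (f i).base) (Set.range (f j).base)) ∧
    (∀ i j, i ≠ j → Disjoint (Set.range (g i).base) (Set.range (g j).base)) ∧
    (⋃ i, Set.range (f i).base) = Set.univ ∧
    (⋃ i, Set.range (g i).base) = Set.univ ∧
    ∀ i, ∃ e : (P i).toScheme ≅ (Q i).toScheme, e.hom ≫ (Q i).str = (P i).str

/-- The set of generators of the scissor-type relations among varieties of the class `P`:
`[X] = [X']` for `X ≅ X'` over `k`, and `[X] = [Y] + [U]` whenever `Y` is a closed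
subvariety of `X` and `U` is its open complement. -/
def cutRel (P : Variety k → Prop) : Set (FreeAbelianGroup {V : Variety k // P V}) :=
  {a | (∃ X Y : {V : Variety k // P V},
          (∃ e : X.1.toScheme ≅ Y.1.toScheme, e.hom ≫ Y.1.str = X.1.str) ∧
          a = FreeAbelianGroup.of X - FreeAbelianGroup.of Y) ∨
       (∃ (X Y U : {V : Variety k // P V}) (i : Y.1.toScheme ⟶ X.1.toScheme)
          (j : U.1.toScheme ⟶ X.1.toScheme),
          IsClosedImmersion i ∧ IsOpenImmersion j ∧
          i ≫ X.1.str = Y.1.str ∧ j ≫ X.1.str = U.1.str ∧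
          Set.range j.base = (Set.range i.base)ᶜ ∧
          a = FreeAbelianGroup.of X - FreeAbelianGroup.of Y - FreeAbelianGroup.of U)}

/-- The Grothendieck group of the class of varieties satisfying `P`: the free abelian
group on (isomorphism classes of) varieties satisfying `P`, modulo the relations
`[X] = [Y] + [X ∖ Y]` for closed subvarieties `Y` of `X`. -/
def K0 (k : Type u) [Field k] (P : Variety k → Prop) : Type (u + 1) :=
  FreeAbelianGroup {V : Variety k // P V} ⧸ AddSubgroup.closure (cutRel P)

instance (P : Variety k → Prop) : AddCommGroup (K0 k P) :=
  QuotientAddGroup.Quotient.addCommGroup _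

/-- The class of a variety in the Grothendieck group. -/
def K0.cls {P : Variety k → Prop} (V : Variety k) (hV : P V) : K0 k P :=
  QuotientAddGroup.mk (FreeAbelianGroup.of ⟨V, hV⟩)

/-- `K_0(V_k^{(n)})`: the Grothendieck group of varieties of dimension at most `n`. -/
abbrev K0le (k : Type u) [Field k] (n : ℕ) : Type (u + 1) :=
  K0 k (fun V => V.dim ≤ (n : WithBot ℕ∞))

/-- `K_0[V_k]` (as an abelian group): the Grothendieck group of all varieties over `k`. -/
abbrev K0Var (k : Type u) [Field k] : Type (u + 1) := K0 k (fun _ => True)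

/-- The class of a variety in `K_0[V_k]`. -/
def K0Var.cls (V : Variety k) : K0Var k := K0.cls V trivial

/-- `K_0(V_k^{(n,n-1)})`: the Grothendieck group of varieties of dimension at most `n`,
where moreover the class of every variety of dimension `< n` is set to `0`. -/
def K0graded (k : Type u) [Field k] (n : ℕ) : Type (u + 1) :=
  FreeAbelianGroup {V : Variety k // V.dim ≤ (n : WithBot ℕ∞)} ⧸
    AddSubgroup.closure (cutRel (fun V => V.dim ≤ (n : WithBot ℕ∞)) ∪
      {a | ∃ X : {V : Variety k // V.dim ≤ (n : WithBot ℕ∞)},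
        X.1.dim < (n : WithBot ℕ∞) ∧ a = FreeAbelianGroup.of X})

instance (n : ℕ) : AddCommGroup (K0graded k n) :=
  QuotientAddGroup.Quotient.addCommGroup _

/-- The class of a variety in `K_0(V_k^{(n,n-1)})`. -/
def K0graded.cls (n : ℕ) (V : Variety k) (hV : V.dim ≤ (n : WithBot ℕ∞)) : K0graded k n :=
  QuotientAddGroup.mk (FreeAbelianGroup.of ⟨V, hV⟩)

/-- `x ∈ K_0(V_k^{(b)})` lies in the image of multiplication by `L = [𝔸¹]`, viewed as the
map `K_0(V_k^{(a)}) → K_0(V_k^{(b)})` sending `[Z]` to `[Z × 𝔸¹]`. -/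
def InMulLImage (a b : ℕ) (x : K0le k b) : Prop :=
  ∃ (m : ℕ) (c : Fin m → ℤ) (Z W : Fin m → Variety k)
    (_ : ∀ i, (Z i).dim ≤ (a : WithBot ℕ∞)) (hW : ∀ i, (W i).dim ≤ (b : WithBot ℕ∞)),
    (∀ i, ∃ A : Variety k, IsAffLine A ∧ IsProductOf (W i) (Z i) A) ∧
    x = ∑ i, c i • K0.cls (W i) (hW i)

/-- `L · χ = 0` in `K_0[V_k]`: there is a representation `χ = ∑ cᵢ [Zᵢ]` with
`∑ cᵢ [Zᵢ × 𝔸¹] = 0`. -/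
def MulLZero (χ : K0Var k) : Prop :=
  ∃ (m : ℕ) (c : Fin m → ℤ) (Z W : Fin m → Variety k),
    (∀ i, ∃ A : Variety k, IsAffLine A ∧ IsProductOf (W i) (Z i) A) ∧
    χ = ∑ i, c i • K0Var.cls (Z i) ∧
    (0 : K0Var k) = ∑ i, c i • K0Var.cls (W i)

/-- The subgroup of `K_0[V_k]` of multiples of `L`, i.e. the ideal generated by `L`
viewed as an additive subgroup. -/
def LMultiples (k : Type u) [Field k] : AddSubgroup (K0Var k) :=
  AddSubgroup.closure
    {y | ∃ (m : ℕ) (c : Fin m → ℤ) (Z W : Fin m → Variety k),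
      (∀ i, ∃ A : Variety k, IsAffLine A ∧ IsProductOf (W i) (Z i) A) ∧
      y = ∑ i, c i • K0Var.cls (W i)}

/-- `Z` realizes the closed complement `X ∖ U` of the open `U ⊆ X` as a variety. -/
def IsComplementOf (Z X : Variety k) (U : X.toScheme.Opens) : Prop :=
  ∃ i : Z.toScheme ⟶ X.toScheme, IsClosedImmersion i ∧ i ≫ X.str = Z.str ∧
    Set.range i.base = (U : Set X.toScheme)ᶜ

/-- The birational isomorphism between `n`-dimensional varieties `X ⇢ Y` represented by
an isomorphism `U → V` of open subvarieties is convenient: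
`[X ∖ U] - [Y ∖ V]` lies in the image of `·L : K_0(V_k^{(n-2)}) → K_0(V_k^{(n-1)})`. -/
def ConvenientRep (n : ℕ) (X Y : Variety k) (U : X.toScheme.Opens)
    (V : Y.toScheme.Opens) : Prop :=
  ∀ (ZX ZY : Variety k) (hZX : ZX.dim ≤ ((n - 1 : ℕ) : WithBot ℕ∞))
    (hZY : ZY.dim ≤ ((n - 1 : ℕ) : WithBot ℕ∞)),
    IsComplementOf ZX X U → IsComplementOf ZY Y V →
    InMulLImage (n - 2) (n - 1) (K0.cls ZX hZX - K0.cls ZY hZY)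

/-- A field `k` is convenient if every birational isomorphism between smooth projective
varieties over `k` is convenient. -/
def ConvenientField (k : Type u) [Field k] : Prop :=
  ∀ (n : ℕ) (X Y : Variety k), IsSmoothVar X → IsSmoothVar Y →
    IsProjectiveVar X → IsProjectiveVar Y →
    IrreducibleSpace X.toScheme → IrreducibleSpace Y.toScheme →
    X.dim = (n : WithBot ℕ∞) → Y.dim = (n : WithBot ℕ∞) →
    ∀ (U : X.toScheme.Opens) (V : Y.toScheme.Opens),
      Dense (U : Set X.toScheme) → Dense (V : Set Y.toScheme) →
      ∀ e : U.toScheme ≅ V.toScheme, e.hom ≫ V.ι ≫ Y.str = U.ι ≫ X.str →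
      ConvenientRep n X Y U V

end Variety
namespace Variety

variable {k : Type u} [Field k]

/-- The type of birational isomorphism classes of irreducible `n`-dimensional
varieties over `k` (the set `B_n`). -/
def BirClass (k : Type u) [Field k] (n : ℕ) : Type (u + 1) :=
  Quot (fun X Y : {V : Variety k // IrreducibleSpace V.toScheme ∧
    V.dim = (n : WithBot ℕ∞)} => BirEquiv X.1 Y.1)

/-- The type of stable birational isomorphism classes of irreducible varieties
over `k` (the set `SB`). -/
def StableBirClass (k : Type u) [Field k] : Type (u + 1) :=
  Quot (fun X Y : {V : Variety k // IrreducibleSpace V.toScheme} =>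
    StablyBirational X.1 Y.1)

/-- The family of varieties `C` together with the closed immersions `f i` realizes
exactly the `n`-dimensional irreducible components of `X`, each exactly once. -/
def RealizesComponents (n : ℕ) (X : Variety k) (m : ℕ)
    (C : Fin m → Variety k) (f : ∀ i, (C i).toScheme ⟶ X.toScheme) : Prop :=
  (∀ i, IsClosedImmersion (f i)) ∧ (∀ i, f i ≫ X.str = (C i).str) ∧
  Function.Injective (fun i => Set.range (f i).base) ∧
  (Set.range fun i => Set.range (f i).base) =
    {S | S ∈ irreducibleComponents X.toScheme ∧
      topologicalKrullDim S = (n : WithBot ℕ∞)}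

/-- `p : E ⟶ Z` is a Zariski-locally trivial `ℙ^ℓ`-bundle: every point of `Z` has an
open neighbourhood `W` such that `p⁻¹(W)` is isomorphic over `W` to `W × ℙ^ℓ`. -/
def IsProjBundle (ℓ : ℕ) {E Z : Variety k} (p : E.toScheme ⟶ Z.toScheme) : Prop :=
  ∀ z : Z.toScheme, ∃ W : Z.toScheme.Opens, z ∈ W ∧
    ∃ e : (p ⁻¹ᵁ W).toScheme ≅ Limits.pullback (W.ι ≫ Z.str) (ProjSpace.str k ℓ),
      e.hom ≫ Limits.pullback.fst (W.ι ≫ Z.str) (ProjSpace.str k ℓ) = p ∣_ W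

/-- `X` (of dimension `d`) has stable dimensional complexity `m`: `m` is the minimal
integer such that `X` is stably birational to `X' × 𝔸^(d-m)` for some variety `X'` of
dimension `m`. -/
def HasStableDimComplexity (X : Variety k) (d m : ℕ) : Prop :=
  (∃ X' A P : Variety k, X'.dim = (m : WithBot ℕ∞) ∧ IsAffSpace (d - m) A ∧
      IsProductOf P X' A ∧ StablyBirational X P) ∧
  ∀ j < m, ¬ ∃ X' A P : Variety k, X'.dim = (j : WithBot ℕ∞) ∧ IsAffSpace (d - j) A ∧
      IsProductOf P X' A ∧ StablyBirational X P

/-- Generators of the covering relations among smooth varieties: `[X] = ∑ᵢ [Xᵢ]`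
whenever `{Xᵢ → X}` is a finite family of locally closed embeddings of smooth
varieties with pairwise disjoint images whose union is all of `X`. -/
def smCutRel (k : Type u) [Field k] :
    Set (FreeAbelianGroup {V : Variety k // IsSmoothVar V}) :=
  {a | ∃ (X : {V : Variety k // IsSmoothVar V}) (m : ℕ)
        (P : Fin m → {V : Variety k // IsSmoothVar V})
        (f : ∀ i, (P i).1.toScheme ⟶ X.1.toScheme),
        (∀ i, IsImmersion (f i)) ∧ (∀ i, f i ≫ X.1.str = (P i).1.str) ∧
        (∀ i j, i ≠ j → Disjoint (Set.range (f i).base) (Set.range (f j).base)) ∧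
        (⋃ i, Set.range (f i).base) = Set.univ ∧
        a = FreeAbelianGroup.of X - ∑ i, FreeAbelianGroup.of (P i)}

/-- `K_0(V_k^{sm})`: the Grothendieck group of smooth varieties over `k`, with the
covering relations. -/
def K0sm (k : Type u) [Field k] : Type (u + 1) :=
  FreeAbelianGroup {V : Variety k // IsSmoothVar V} ⧸ AddSubgroup.closure (smCutRel k)

instance : AddCommGroup (K0sm k) := QuotientAddGroup.Quotient.addCommGroup _

/-- The class of a smooth variety in `K_0(V_k^{sm})`. -/
def K0sm.cls (V : Variety k) (hV : IsSmoothVar V) : K0sm k :=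
  QuotientAddGroup.mk (FreeAbelianGroup.of ⟨V, hV⟩)

end Variety
namespace Variety

variable {k : Type u} [Field k]

/-- The class of a variety in `K_0(V_k^{(n)})`. -/
def K0le.cls (n : ℕ) (V : Variety k) (hV : V.dim ≤ (n : WithBot ℕ∞)) : K0le k n :=
  K0.cls V hV

end Variety

open Variety

namespace ConvAux

open TopologicalSpace

variable {k : Type u} [Field k]

/-- A closed subset of a scheme carries a reduced closed subscheme structure. -/
lemma exists_reduced_closed (X : Scheme.{u}) (S : Set X) (hS : IsClosed S) :
    ∃ (C : Scheme.{u}) (i : C ⟶ X), IsReduced C ∧ IsClosedImmersion i ∧ Set.range i.base = S := by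
  let I := Scheme.IdealSheafData.vanishingIdeal (X := X) ⟨S, hS⟩
  refine ⟨I.subscheme, I.subschemeι, ?_, inferInstance, ?_⟩
  · have h : ∀ U : X.affineOpens, IsReduced (Spec (CommRingCat.of (Γ(X, U) ⧸ I.ideal U))) := by
      intro U
      have : (I.ideal U).IsRadical := by
        have := PrimeSpectrum.isRadical_vanishingIdeal (U.2.fromSpec ⁻¹' S)
        exact this
      have : _root_.IsReduced (Γ(X, U) ⧸ I.ideal U) :=
        (Ideal.isRadical_iff_quotient_reduced _).mp this
      infer_instance
    have : ∀ i, IsReduced (I.subschemeCover.openCover.X i) := h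
    exact IsReduced.of_openCover (𝒰 := I.subschemeCover.openCover)
  · exact I.range_subschemeι

/-- Every variety is locally Noetherian. -/
lemma locNoeth (X : Variety k) : IsLocallyNoetherian X.toScheme := by
  have := X.locallyOfFiniteType
  exact LocallyOfFiniteType.isLocallyNoetherian X.str

/-- A reduced closed subscheme of a variety, as a variety. -/
def ofClosed (X : Variety k) {C : Scheme.{u}} (i : C ⟶ X.toScheme) [IsClosedImmersion i]
    [IsReduced C] : Variety k :=
  have := X.separated
  have := X.locallyOfFiniteType
  have := X.quasiCompact
  { toScheme := C
    str := i ≫ X.str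
    reduced := inferInstance
    separated := inferInstance
    locallyOfFiniteType := inferInstance
    quasiCompact := inferInstance }

/-- An open subscheme of a variety, as a variety. -/
def ofOpen (X : Variety k) (U : X.toScheme.Opens) : Variety k :=
  have := X.separated
  have := X.locallyOfFiniteType
  have := X.quasiCompact
  have := X.reduced
  have := locNoeth X
  { toScheme := U.toScheme
    str := U.ι ≫ X.str
    reduced := isReduced_of_isOpenImmersion U.ι
    separated := inferInstance
    locallyOfFiniteType := inferInstance
    quasiCompact := inferInstance }

/-- Reduced closed subschemes with the same support are isomorphic. -/
lemma iso_of_range_eq {A B X : Scheme.{u}} (f : A ⟶ X) (g : B ⟶ X) [IsClosedImmersion f]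
    [IsClosedImmersion g] [IsReduced A] [IsReduced B]
    (h : Set.range f.base = Set.range g.base) : ∃ e : A ≅ B, e.hom ≫ g = f := by
  have h1 : Surjective (pullback.fst f g) := ⟨by
    rw [← Set.range_eq_univ]
    refine (Scheme.Pullback.range_fst f g).trans ?_
    rw [Set.preimage_eq_univ_iff]
    exact h.le⟩
  have h2 : Surjective (pullback.snd f g) := ⟨by
    rw [← Set.range_eq_univ]
    refine (Scheme.Pullback.range_snd f g).trans ?_
    rw [Set.preimage_eq_univ_iff]
    exact h.ge⟩
  have := isIso_of_isClosedImmersion_of_surjective (pullback.fst f g)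
  have := isIso_of_isClosedImmersion_of_surjective (pullback.snd f g)
  refine ⟨(asIso (pullback.fst f g)).symm ≪≫ asIso (pullback.snd f g), ?_⟩
  simp [← pullback.condition]

lemma cls_iso {P : Variety k → Prop} (A B : Variety k) (hA : P A) (hB : P B)
    (e : A.toScheme ≅ B.toScheme) (he : e.hom ≫ B.str = A.str) :
    (K0.cls A hA : K0 k P) = K0.cls B hB := by
  rw [← sub_eq_zero]
  refine (QuotientAddGroup.eq_zero_iff (N := AddSubgroup.closure (cutRel P))
    (FreeAbelianGroup.of (⟨A, hA⟩ : {V : Variety k // P V}) -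
    FreeAbelianGroup.of ⟨B, hB⟩)).mpr (AddSubgroup.subset_closure (Or.inl ?_))
  exact ⟨⟨A, hA⟩, ⟨B, hB⟩, ⟨e, he⟩, rfl⟩

lemma cls_cut {P : Variety k → Prop} (X Y U : Variety k) (hX : P X) (hY : P Y) (hU : P U)
    (i : Y.toScheme ⟶ X.toScheme) (j : U.toScheme ⟶ X.toScheme)
    (hi : IsClosedImmersion i) (hj : IsOpenImmersion j)
    (hi' : i ≫ X.str = Y.str) (hj' : j ≫ X.str = U.str)
    (hr : Set.range j.base = (Set.range i.base)ᶜ) :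
    (K0.cls X hX : K0 k P) = K0.cls Y hY + K0.cls U hU := by
  rw [← sub_eq_zero, ← sub_sub]
  refine (QuotientAddGroup.eq_zero_iff (N := AddSubgroup.closure (cutRel P))
    (FreeAbelianGroup.of (⟨X, hX⟩ : {V : Variety k // P V}) -
    FreeAbelianGroup.of ⟨Y, hY⟩ - FreeAbelianGroup.of ⟨U, hU⟩)).mpr
      (AddSubgroup.subset_closure (Or.inr ?_))
  exact ⟨⟨X, hX⟩, ⟨Y, hY⟩, ⟨U, hU⟩, i, j, hi, hj, hi', hj', hr, rfl⟩

lemma inMulL_add {a b : ℕ} {x y : K0le k b} (hx : InMulLImage a b x) (hy : InMulLImage a b y) :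
    InMulLImage a b (x + y) := by
  obtain ⟨m, c, Z, W, hZ, hW, h, rfl⟩ := hx
  obtain ⟨m', c', Z', W', hZ', hW', h', rfl⟩ := hy
  refine ⟨m + m', Fin.append c c', Fin.append Z Z', Fin.append W W', ?_, ?_, ?_, ?_⟩
  · intro i; refine Fin.addCases (fun i => ?_) (fun i => ?_) i
    · simpa using hZ i
    · simpa using hZ' i
  · intro i; refine Fin.addCases (fun i => ?_) (fun i => ?_) i
    · simpa using hW i
    · simpa using hW' i
  · intro i; refine Fin.addCases (fun i => ?_) (fun i => ?_) i
    · simpa using h i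
    · simpa using h' i
  · rw [Fin.sum_univ_add]
    simp

/-- A proper closed subset of an irreducible space of dimension `n` has dimension `≤ n - 1`. -/
lemma dim_closed {A B : Type*} [TopologicalSpace A] [TopologicalSpace B] [IrreducibleSpace B]
    (f : A → B) (hf : Topology.IsClosedEmbedding f) (hne : Set.range f ≠ Set.univ) (n : ℕ)
    (hB : topologicalKrullDim B = n) : topologicalKrullDim A ≤ ((n - 1 : ℕ) : WithBot ℕ∞) := by
  unfold topologicalKrullDim at *
  refine iSup_le fun p => ?_
  let T : IrreducibleCloseds B := ⟨Set.univ, IrreducibleSpace.isIrreducible_univ B, isClosed_univ⟩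
  let q := p.map _ (IrreducibleCloseds.map_strictMono_of_isInducing hf.isInducing)
  have hq : q.last < T := by
    refine lt_of_le_of_ne (fun x _ => trivial) fun h => hne ?_
    have h2 : closure (f '' (p.last : Set A)) = Set.univ := congrArg (fun t : IrreducibleCloseds B => (t : Set B)) h
    rw [Set.eq_univ_iff_forall]
    intro x
    have hx : x ∈ closure (f '' (p.last : Set A)) := h2 ▸ trivial
    exact closure_minimal (Set.image_subset_range _ _) hf.isClosed_range hx
  have h3 := Order.LTSeries.length_le_krullDim (q.snoc T hq)
  rw [hB] at h3
  have h4 : p.length + 1 ≤ n := by exact_mod_cast h3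
  have : p.length ≤ n - 1 := by omega
  exact_mod_cast this

/-- Cutting the complement of `U₀` along `U ≥ U₀`. -/
lemma cut_complement (d : ℕ) (X : Variety k) (U U₀ : X.toScheme.Opens) (hle : U₀ ≤ U)
    (C₀ : Variety k) (hC₀ : C₀.dim ≤ (d : WithBot ℕ∞)) (i : C₀.toScheme ⟶ X.toScheme)
    (hi : IsClosedImmersion i) (his : i ≫ X.str = C₀.str)
    (hir : Set.range i.base = (U₀ : Set X.toScheme)ᶜ) :
    ∃ (C : Variety k) (hC : C.dim ≤ (d : WithBot ℕ∞))
      (hD : (ofOpen C₀ (i ⁻¹ᵁ U)).dim ≤ (d : WithBot ℕ∞)),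
      IsComplementOf C X U ∧
      (K0.cls C₀ hC₀ : K0le k d) = K0.cls C hC + K0.cls (ofOpen C₀ (i ⁻¹ᵁ U)) hD := by
  obtain ⟨C, j, hCr, hj, hjr⟩ := exists_reduced_closed C₀.toScheme
    ((i ⁻¹ᵁ U : C₀.toScheme.Opens) : Set C₀.toScheme)ᶜ (i ⁻¹ᵁ U).2.isClosed_compl
  refine ⟨ofClosed C₀ j, le_trans ?_ hC₀, le_trans ?_ hC₀, ?_, ?_⟩
  · exact j.isClosedEmbedding.isInducing.topologicalKrullDim_le
  · exact (i ⁻¹ᵁ U).ι.isOpenEmbedding.isInducing.topologicalKrullDim_le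
  · have h1 : IsClosedImmersion (j ≫ i) := inferInstance
    have h2 : (j ≫ i) ≫ X.str = j ≫ C₀.str := by rw [Category.assoc, his]
    have h3 : Set.range (j ≫ i).base = (U : Set X.toScheme)ᶜ := by
      have : Set.range (j ≫ i).base = i.base '' Set.range j.base := by
        rw [← Set.range_comp]; rfl
      rw [this, hjr]
      ext x
      constructor
      · rintro ⟨y, hy, rfl⟩ h
        exact hy h
      · intro hx
        have : x ∈ Set.range i.base := by rw [hir]; exact fun h => hx (hle h)
        obtain ⟨y, rfl⟩ := this
        exact ⟨y, hx, rfl⟩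
    exact ⟨j ≫ i, h1, h2, h3⟩
  · have h1 : IsOpenImmersion (i ⁻¹ᵁ U).ι := inferInstance
    have h2 : Set.range (i ⁻¹ᵁ U).ι.base = (Set.range j.base)ᶜ := by
      rw [hjr, compl_compl]
      exact Scheme.Opens.range_ι _
    exact cls_cut C₀ (ofClosed C₀ j) (ofOpen C₀ (i ⁻¹ᵁ U)) _ _ _ j (i ⁻¹ᵁ U).ι hj h1
      rfl rfl h2

/-- Convenience does not depend on the representative. -/
lemma shrink (n : ℕ) (X Y : Variety k) (U U₀ : X.toScheme.Opens) (V V₀ : Y.toScheme.Opens)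
    (hU : U₀ ≤ U) (hV : V₀ ≤ V) (e : U.toScheme ≅ V.toScheme)
    (he : e.hom ≫ V.ι ≫ Y.str = U.ι ≫ X.str)
    (h : ∀ x : U.toScheme, V.ι.base (e.hom.base x) ∈ V₀ ↔ U.ι.base x ∈ U₀)
    (hc : ConvenientRep n X Y U V) : ConvenientRep n X Y U₀ V₀ := by
  rintro A B hA hB ⟨i, hi, his, hir⟩ ⟨j, hj, hjs, hjr⟩
  obtain ⟨A', hA', hAD, hAc, hAe⟩ := cut_complement _ X U U₀ hU A hA i hi his hir
  obtain ⟨B', hB', hBD, hBc, hBe⟩ := cut_complement _ Y V V₀ hV B hB j hj hjs hjr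
  have key := hc A' B' hA' hB' hAc hBc
  have hiso : (K0.cls (ofOpen A (i ⁻¹ᵁ U)) hAD : K0le k (n - 1)) =
      K0.cls (ofOpen B (j ⁻¹ᵁ V)) hBD := by
    have : IsReduced (i ⁻¹ᵁ U).toScheme := (ofOpen A (i ⁻¹ᵁ U)).reduced
    have : IsReduced (j ⁻¹ᵁ V).toScheme := (ofOpen B (j ⁻¹ᵁ V)).reduced
    have : IsClosedImmersion (i ∣_ U) := inferInstance
    have : IsClosedImmersion (j ∣_ V) := inferInstance
    have r1 : Set.range (i ∣_ U).base = {x | U.ι.base x ∉ U₀} := by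
      ext x
      constructor
      · rintro ⟨y, rfl⟩
        have : U.ι.base ((i ∣_ U).base y) = i.base ((i ⁻¹ᵁ U).ι.base y) :=
          congrArg (fun f => f.base y) (morphismRestrict_ι i U)
        show U.ι.base ((i ∣_ U).base y) ∈ (U₀ : Set X.toScheme)ᶜ
        rw [this, ← hir]
        exact ⟨_, rfl⟩
      · intro hx
        have : U.ι.base x ∈ Set.range i.base := by rw [hir]; exact hx
        obtain ⟨y, hy⟩ := this
        have hyU : i.base y ∈ U := by rw [hy]; exact x.2
        refine ⟨⟨y, hyU⟩, U.ι.isOpenEmbedding.injective ?_⟩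
        have h3 : U.ι.base ((i ∣_ U).base ⟨y, hyU⟩) = i.base ((i ⁻¹ᵁ U).ι.base ⟨y, hyU⟩) :=
          congrArg (fun f => f.base ⟨y, hyU⟩) (morphismRestrict_ι i U)
        exact h3.trans hy
    have r2 : Set.range (j ∣_ V).base = {x | V.ι.base x ∉ V₀} := by
      ext x
      constructor
      · rintro ⟨y, rfl⟩
        have : V.ι.base ((j ∣_ V).base y) = j.base ((j ⁻¹ᵁ V).ι.base y) :=
          congrArg (fun f => f.base y) (morphismRestrict_ι j V)
        show V.ι.base ((j ∣_ V).base y) ∈ (V₀ : Set Y.toScheme)ᶜ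
        rw [this, ← hjr]
        exact ⟨_, rfl⟩
      · intro hx
        have : V.ι.base x ∈ Set.range j.base := by rw [hjr]; exact hx
        obtain ⟨y, hy⟩ := this
        have hyU : j.base y ∈ V := by rw [hy]; exact x.2
        refine ⟨⟨y, hyU⟩, V.ι.isOpenEmbedding.injective ?_⟩
        have h3 : V.ι.base ((j ∣_ V).base ⟨y, hyU⟩) = j.base ((j ⁻¹ᵁ V).ι.base ⟨y, hyU⟩) :=
          congrArg (fun f => f.base ⟨y, hyU⟩) (morphismRestrict_ι j V)
        exact h3.trans hy
    obtain ⟨φ, hφ⟩ := iso_of_range_eq (i ∣_ U ≫ e.hom) (j ∣_ V) (by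
      have : Set.range (i ∣_ U ≫ e.hom).base = e.hom.base '' Set.range (i ∣_ U).base := by
        rw [← Set.range_comp]; rfl
      rw [this, r1, r2]
      ext x
      constructor
      · rintro ⟨y, hy, rfl⟩
        exact fun hh => hy ((h y).mp hh)
      · intro hx
        obtain ⟨y, rfl⟩ := e.hom.homeomorph.surjective x
        exact ⟨y, fun hh => hx ((h y).mpr hh), rfl⟩)
    refine cls_iso _ _ _ _ φ ?_
    show φ.hom ≫ (j ⁻¹ᵁ V).ι ≫ B.str = (i ⁻¹ᵁ U).ι ≫ A.str
    rw [← hjs, ← his, ← morphismRestrict_ι_assoc, ← morphismRestrict_ι_assoc, ← he,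
      reassoc_of% hφ]
  rw [hAe, hBe, hiso, add_sub_add_right_eq_sub]
  exact key

end ConvAux

/-- The composite of convenient birational isomorphisms between smooth
projective varieties of dimension `n` is convenient. -/
theorem convenientRep_comp (k : Type u) [Field k] (n : ℕ) (X Y Z : Variety k)
    (hXs : IsSmoothVar X) (hYs : IsSmoothVar Y) (hZs : IsSmoothVar Z)
    (hXp : IsProjectiveVar X) (hYp : IsProjectiveVar Y) (hZp : IsProjectiveVar Z)
    (hXi : IrreducibleSpace X.toScheme) (hYi : IrreducibleSpace Y.toScheme)
    (hZi : IrreducibleSpace Z.toScheme)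
    (hXd : X.dim = (n : WithBot ℕ∞)) (hYd : Y.dim = (n : WithBot ℕ∞))
    (hZd : Z.dim = (n : WithBot ℕ∞))
    -- `φ' : X ⇢ Y`, represented by `e' : U ≅ V`, convenient:
    (U : X.toScheme.Opens) (V : Y.toScheme.Opens)
    (hU : Dense (U : Set X.toScheme)) (hV : Dense (V : Set Y.toScheme))
    (e' : U.toScheme ≅ V.toScheme) (he' : e'.hom ≫ V.ι ≫ Y.str = U.ι ≫ X.str)
    (hconv' : ConvenientRep n X Y U V)
    -- `φ'' : Y ⇢ Z`, represented by `e'' : W ≅ T`, convenient: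
    (W : Y.toScheme.Opens) (T : Z.toScheme.Opens)
    (hW : Dense (W : Set Y.toScheme)) (hT : Dense (T : Set Z.toScheme))
    (e'' : W.toScheme ≅ T.toScheme) (he'' : e''.hom ≫ T.ι ≫ Z.str = W.ι ≫ Y.str)
    (hconv'' : ConvenientRep n Y Z W T)
    -- a representative `e₀ : U₀ ≅ T₀` of the composite `φ'' ∘ φ' : X ⇢ Z`:
    (U₀ : X.toScheme.Opens) (T₀ : Z.toScheme.Opens)
    (hU₀ : Dense (U₀ : Set X.toScheme)) (hT₀ : Dense (T₀ : Set Z.toScheme))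
    (e₀ : U₀.toScheme ≅ T₀.toScheme)
    (a : U₀.toScheme ⟶ U.toScheme) (g : U₀.toScheme ⟶ W.toScheme)
    (ha : a ≫ U.ι = U₀.ι)
    (hg : a ≫ e'.hom ≫ V.ι = g ≫ W.ι)
    (h₀ : g ≫ e''.hom ≫ T.ι = e₀.hom ≫ T₀.ι) :
    ConvenientRep n X Z U₀ T₀ := by
  have : IsOpenImmersion a := by
    have : IsOpenImmersion (a ≫ U.ι) := ha ▸ inferInstance
    exact IsOpenImmersion.of_comp a U.ι
  let V₀ : Y.toScheme.Opens := (a ≫ e'.hom ≫ V.ι).opensRange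
  have mV₀ : ∀ y, y ∈ V₀ ↔ ∃ x, V.ι.base (e'.hom.base (a.base x)) = y := fun y => Iff.rfl
  have hga : ∀ x, V.ι.base (e'.hom.base (a.base x)) = W.ι.base (g.base x) :=
    fun x => congrArg (fun f => f.base x) hg
  have hax : ∀ x, U.ι.base (a.base x) = U₀.ι.base x := fun x => congrArg (fun f => f.base x) ha
  have h₀x : ∀ x, T.ι.base (e''.hom.base (g.base x)) = T₀.ι.base (e₀.hom.base x) :=
    fun x => congrArg (fun f => f.base x) h₀
  have hUU : U₀ ≤ U := fun x hx => by
    have := hax ⟨x, hx⟩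
    have h2 : U.ι.base (a.base ⟨x, hx⟩) = x := this
    rw [← h2]
    exact (a.base ⟨x, hx⟩).2
  have hVV : V₀ ≤ V := by
    rintro y ⟨x, rfl⟩
    exact (e'.hom.base (a.base x)).2
  have hVW : V₀ ≤ W := by
    intro y hy
    obtain ⟨x, rfl⟩ := (mV₀ y).mp hy
    rw [hga]
    exact (g.base x).2
  have hTT : T₀ ≤ T := by
    intro z hz
    obtain ⟨x, hx⟩ := e₀.hom.homeomorph.surjective ⟨z, hz⟩
    have h2 : T₀.ι.base (e₀.hom.base x) = z := congrArg (fun t => T₀.ι.base t) hx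
    rw [← h2, ← h₀x]
    exact (e''.hom.base (g.base x)).2
  have c1 : ConvenientRep n X Y U₀ V₀ := by
    refine ConvAux.shrink n X Y U U₀ V V₀ hUU hVV e' he' (fun x => ?_) hconv'
    rw [mV₀]
    constructor
    · rintro ⟨y, hy⟩
      have := e'.hom.homeomorph.injective (V.ι.isOpenEmbedding.injective hy)
      rw [← this, hax]
      exact y.2
    · intro hx
      refine ⟨⟨_, hx⟩, ?_⟩
      congr 2
      exact U.ι.isOpenEmbedding.injective (hax _)
  have c2 : ConvenientRep n Y Z V₀ T₀ := by
    refine ConvAux.shrink n Y Z W V₀ T T₀ hVW hTT e'' he'' (fun x => ?_) hconv''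
    rw [mV₀]
    constructor
    · intro hx
      obtain ⟨y, hy⟩ := e₀.hom.homeomorph.surjective ⟨_, hx⟩
      have h2 : T₀.ι.base (e₀.hom.base y) = T.ι.base (e''.hom.base x) :=
        congrArg (fun t => T₀.ι.base t) hy
      rw [← h₀x] at h2
      refine ⟨y, ?_⟩
      rw [hga, e''.hom.homeomorph.injective (T.ι.isOpenEmbedding.injective h2)]
    · rintro ⟨y, hy⟩
      rw [hga] at hy
      rw [← W.ι.isOpenEmbedding.injective hy, h₀x]
      exact (e₀.hom.base y).2
  rintro A B hA hB hAc hBc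
  obtain ⟨C, j, hCr, hj, hjr⟩ := ConvAux.exists_reduced_closed Y.toScheme
    (V₀ : Set Y.toScheme)ᶜ V₀.2.isClosed_compl
  have hCd : (ConvAux.ofClosed Y j).dim ≤ ((n - 1 : ℕ) : WithBot ℕ∞) := by
    refine ConvAux.dim_closed j.base j.isClosedEmbedding ?_ n hYd
    rw [hjr]
    obtain ⟨x, hx⟩ := hU₀.nonempty
    intro hh
    have : (V.ι.base (e'.hom.base (a.base ⟨x, hx⟩))) ∈ (V₀ : Set Y.toScheme)ᶜ := hh ▸ trivial
    exact this ⟨_, rfl⟩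
  have hCc : IsComplementOf (ConvAux.ofClosed Y j) Y V₀ := ⟨j, hj, rfl, hjr⟩
  have := ConvAux.inMulL_add (c1 A _ hA hCd hAc hCc) (c2 _ B hCd hB hCc hBc)
  rwa [sub_add_sub_cancel] at this
end
end

section
/- Let X and Y be varieties over a field k of dimension at most n such that [X] = [Y] in K_0(V_k^{(n,n-1)}). Then there exist open subvarieties U ⊆ X and V ⊆ Y such that U and V are piecewise isomorphic and both X∖U and Y∖V have dimension strictly less than n. -/
open AlgebraicGeometry CategoryTheory CategoryTheory.Limits

noncomputable section

universe u

open Variety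

section PartA

theorem aux_trdeg_lt {k B C : Type u} [Field k] [CommRing B] [IsDomain B] [CommRing C] [IsDomain C]
    [Algebra k B] [Algebra k C] [Algebra.FiniteType k B] (f : B →ₐ[k] C)
    (hf : Function.Surjective f) (b : B) (hb : b ≠ 0) (hb' : f b = 0) :
    Cardinal.toNat (Algebra.trdeg k C) < Cardinal.toNat (Algebra.trdeg k B) := by
  have : Algebra.FiniteType k C := Algebra.FiniteType.of_surjective f hf
  have hB : Algebra.trdeg k B < Cardinal.aleph0 := trdeg_lt_aleph0_of_finiteType
  have hC : Algebra.trdeg k C < Cardinal.aleph0 := trdeg_lt_aleph0_of_finiteType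
  by_contra hlt
  push Not at hlt
  obtain ⟨s, hs⟩ := exists_isTranscendenceBasis k C
  have hcard := hs.cardinalMk_eq_trdeg
  choose y hy using hf
  have hfy : (f ∘ (fun i : s => y i)) = ((↑) : s → C) := by ext i; simp [hy]
  have hi : AlgebraicIndependent k (fun i : s => y i) :=
    AlgebraicIndependent.of_comp f (by rw [hfy]; exact hs.1)
  have hle : Algebra.trdeg k B ≤ Cardinal.mk s := by
    rw [hcard, ← Cardinal.cast_toNat_of_lt_aleph0 hB, ← Cardinal.cast_toNat_of_lt_aleph0 hC]
    exact_mod_cast hlt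
  have hbas := hi.isTranscendenceBasis_of_trdeg_le hB hle
  have halg := hbas.isAlgebraic
  have h1 := Ideal.comap_ne_bot_of_algebraic_mem
    (R := Algebra.adjoin k (Set.range fun i : s => y i))
    (I := RingHom.ker f) hb hb' (halg.isAlgebraic b)
  apply h1
  rw [eq_bot_iff]
  rintro ⟨c, hc⟩ hc'
  have hc0 : f c = 0 := hc'
  rw [Algebra.adjoin_range_eq_range_aeval] at hc
  obtain ⟨P, rfl⟩ := hc
  have : (MvPolynomial.aeval ((↑) : s → C)) P = 0 := by
    rw [← hfy, ← hc0]
    simp only [Function.comp_def]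
    exact (MvPolynomial.comp_aeval_apply _ _ _).symm
  have := hs.1.eq_zero_of_aeval_eq_zero _ this
  subst this
  simp only [map_zero]
  rfl

theorem aux_integral_dim {R S : Type u} [CommRing R] [CommRing S] [Algebra R S]
    [Algebra.IsIntegral R S] [FaithfulSMul R S] : ringKrullDim R ≤ ringKrullDim S := by
  unfold ringKrullDim Order.krullDim
  refine iSup_le fun l => ?_
  have : l.head.asIdeal.IsPrime := inferInstance
  obtain ⟨Q, hQ, hQ1, hQ2⟩ := Ideal.exists_ideal_over_prime_of_isIntegral
    l.head.asIdeal (⊥ : Ideal S) (by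
      intro x hx
      have : algebraMap R S x = 0 := hx
      rw [FaithfulSMul.algebraMap_eq_zero_iff] at this
      simp [this])
  have : Q.LiesOver l.head.asIdeal := ⟨hQ2.symm⟩
  obtain ⟨L, hL, -⟩ := Ideal.exists_ltSeries_of_hasGoingUp l Q
  rw [← hL]
  exact le_iSup (fun p : LTSeries (PrimeSpectrum S) => (p.length : WithBot ℕ∞)) L

theorem aux_trdeg_le {k B : Type u} [Field k] [CommRing B] [IsDomain B]
    [Algebra k B] [Algebra.FiniteType k B]  :
    ((Cardinal.toNat (Algebra.trdeg k B) : ℕ) : WithBot ℕ∞) ≤ ringKrullDim B := by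
  obtain ⟨s, g, hg, hi⟩ := exists_integral_inj_algHom_of_fg k B
  algebraize [g.toRingHom]
  have h2 : FaithfulSMul (MvPolynomial (Fin s) k) B := (faithfulSMul_iff_algebraMap_injective _ _).2 hg
  have h4 : IsScalarTower k (MvPolynomial (Fin s) k) B := IsScalarTower.of_algebraMap_eq' g.comp_algebraMap.symm
  have h3 := trdeg_add_eq k (MvPolynomial (Fin s) k) (A := B)
  have : Algebra.IsAlgebraic (MvPolynomial (Fin s) k) B := inferInstance
  refine le_trans ?_ (aux_integral_dim (R := MvPolynomial (Fin s) k))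
  rw [MvPolynomial.ringKrullDim_of_isNoetherianRing]
  rw [trdeg_eq_zero (R := MvPolynomial (Fin s) k) (A := B), MvPolynomial.trdeg_of_isDomain] at h3
  have := congrArg Cardinal.toNat h3
  simp at this
  simp [← this]

theorem aux_trdeg_resfield {k A : Type u} [Field k] [CommRing A] 
    [Algebra k A] (p : Ideal A) [p.IsPrime] :
    Algebra.trdeg k p.ResidueField = Algebra.trdeg k (A ⧸ p) := by
  have h := trdeg_add_eq k (A ⧸ p) (A := p.ResidueField)
  have : Algebra.IsAlgebraic (A ⧸ p) p.ResidueField := IsLocalization.isAlgebraic _ (nonZeroDivisors _)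
  rw [trdeg_eq_zero (R := A ⧸ p) (A := p.ResidueField)] at h
  simpa using h.symm

theorem aux_trdeg_prime_lt {k A : Type u} [Field k] [CommRing A] 
    [Algebra k A] [Algebra.FiniteType k A] (p q : Ideal A) [p.IsPrime] [q.IsPrime] (h : p < q) :
    Cardinal.toNat (Algebra.trdeg k q.ResidueField) < 
      Cardinal.toNat (Algebra.trdeg k p.ResidueField) := by
  rw [aux_trdeg_resfield, aux_trdeg_resfield]
  obtain ⟨b, hb, hb'⟩ := Set.exists_of_ssubset h
  refine aux_trdeg_lt (Ideal.Quotient.factorₐ k h.le) (Ideal.Quotient.factor_surjective h.le)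
    (Ideal.Quotient.mk p b) ?_ ?_
  · rwa [Ne, Ideal.Quotient.eq_zero_iff_mem]
  · simpa [Ideal.Quotient.eq_zero_iff_mem] using hb

theorem aux_trdeg_prime_le {k A : Type u} [Field k] [CommRing A] 
    [Algebra k A] [Algebra.FiniteType k A] (p : Ideal A) [p.IsPrime] :
    ((Cardinal.toNat (Algebra.trdeg k p.ResidueField) : ℕ) : WithBot ℕ∞) ≤ ringKrullDim A := by
  rw [aux_trdeg_resfield]
  exact aux_trdeg_le.trans (ringKrullDim_quotient_le p)

end PartA

section PartB

variable {k : Type u} [Field k]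

def kx {X : Scheme.{u}} (s : X ⟶ Spec (CommRingCat.of k)) (x : X) :
    CommRingCat.of k ⟶ X.residueField x := Spec.preimage (X.fromSpecResidueField x ≫ s)

theorem kx_spec {X : Scheme.{u}} (s : X ⟶ Spec (CommRingCat.of k)) (x : X) :
    Spec.map (kx s x) = X.fromSpecResidueField x ≫ s := Spec.map_preimage _

def SameRes {X Y : Scheme.{u}} (sX : X ⟶ Spec (CommRingCat.of k)) (x : X)
    (sY : Y ⟶ Spec (CommRingCat.of k)) (y : Y) : Prop :=
  ∃ e : X.residueField x ≅ Y.residueField y, kx sX x ≫ e.hom = kx sY y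

theorem SameRes.refl {X : Scheme.{u}} (sX : X ⟶ Spec (CommRingCat.of k)) (x : X) :
    SameRes sX x sX x := ⟨Iso.refl _, by simp⟩

theorem SameRes.symm {X Y : Scheme.{u}} {sX : X ⟶ Spec (CommRingCat.of k)} {x : X}
    {sY : Y ⟶ Spec (CommRingCat.of k)} {y : Y} (h : SameRes sX x sY y) : SameRes sY y sX x := by
  obtain ⟨e, h⟩ := h
  exact ⟨e.symm, by simp [← h]⟩

theorem SameRes.trans {X Y Z : Scheme.{u}} {sX : X ⟶ Spec (CommRingCat.of k)} {x : X}
    {sY : Y ⟶ Spec (CommRingCat.of k)} {y : Y} {sZ : Z ⟶ Spec (CommRingCat.of k)} {z : Z}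
    (h : SameRes sX x sY y) (h' : SameRes sY y sZ z) : SameRes sX x sZ z := by
  obtain ⟨e, h⟩ := h
  obtain ⟨e', h'⟩ := h'
  exact ⟨e ≪≫ e', by simp [← h, ← h']⟩

def td {X : Scheme.{u}} (s : X ⟶ Spec (CommRingCat.of k)) (x : X) : ℕ :=
  Cardinal.toNat (@Algebra.trdeg k (X.residueField x) _ _ (kx s x).hom.toAlgebra)

theorem aux_trdeg_iso (K L : CommRingCat.{u}) (f : CommRingCat.of k ⟶ K) (g : CommRingCat.of k ⟶ L)
    (e : K ≅ L) (h : f ≫ e.hom = g) :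
    @Algebra.trdeg k K _ _ f.hom.toAlgebra = @Algebra.trdeg k L _ _ g.hom.toAlgebra := by
  let _ := f.hom.toAlgebra
  let _ := g.hom.toAlgebra
  refine AlgEquiv.trdeg_eq (R := k) (A := K) (A' := L)
    (AlgEquiv.ofRingEquiv (f := e.commRingCatIsoToRingEquiv) ?_)
  intro r
  subst h
  rfl

theorem SameRes.td_eq {X Y : Scheme.{u}} {sX : X ⟶ Spec (CommRingCat.of k)} {x : X}
    {sY : Y ⟶ Spec (CommRingCat.of k)} {y : Y} (h : SameRes sX x sY y) : td sX x = td sY y := by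
  obtain ⟨e, h⟩ := h
  unfold td
  rw [aux_trdeg_iso _ _ _ _ e h]

theorem sameRes_of_surj {X Y : Scheme.{u}} {sX : X ⟶ Spec (CommRingCat.of k)}
    {sY : Y ⟶ Spec (CommRingCat.of k)} (f : X ⟶ Y) (hf : f ≫ sY = sX) (x : X)
    (hs : Function.Surjective (f.stalkMap x)) : SameRes sX x sY (f x) := by
  have hb : Function.Bijective (f.residueFieldMap x).hom := by
    refine ⟨RingHom.injective _, ?_⟩
    intro b
    obtain ⟨b, rfl⟩ := X.residue_surjective x b
    obtain ⟨a, rfl⟩ := hs b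
    refine ⟨Y.residue _ a, ?_⟩
    have := Scheme.residue_residueFieldMap f x
    exact congrArg (fun f => f.hom a) this
  have : IsIso (f.residueFieldMap x) := (ConcreteCategory.isIso_iff_bijective _).2 hb
  refine SameRes.symm ⟨asIso (f.residueFieldMap x), Spec.map_injective ?_⟩
  subst hf
  rw [Spec.map_comp, kx_spec, kx_spec]
  simp

theorem sameRes_of_isImmersion {X Y : Scheme.{u}} {sX : X ⟶ Spec (CommRingCat.of k)}
    {sY : Y ⟶ Spec (CommRingCat.of k)} (f : X ⟶ Y) [IsPreimmersion f] (hf : f ≫ sY = sX) (x : X) :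
    SameRes sX x sY (f x) :=
  sameRes_of_surj f hf x (f.stalkMap_surjective x)

theorem td_Spec (R : CommRingCat.{u}) (φ : CommRingCat.of k ⟶ R) (p : PrimeSpectrum R) :
    td (Spec.map φ) p = Cardinal.toNat (@Algebra.trdeg k p.asIdeal.ResidueField _ _
      ((algebraMap R p.asIdeal.ResidueField).comp φ.hom).toAlgebra) := by
  unfold td
  congr 1
  refine aux_trdeg_iso _ (.of p.asIdeal.ResidueField) _
    (φ ≫ CommRingCat.ofHom (algebraMap R p.asIdeal.ResidueField)) (Scheme.Spec.residueFieldIso R p) ?_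
  rw [← Iso.eq_comp_inv]
  apply Spec.map_injective
  refine (kx_spec (X := Spec R) (Spec.map φ) p).trans ?_
  refine (congrArg (· ≫ Spec.map φ)
    (Scheme.Spec.map_residueFieldIso_inv_eq_fromSpecResidueField R p).symm).trans ?_
  refine ((Spec.map_comp _ _).trans ?_).symm
  refine (congrArg (_ ≫ ·) (Spec.map_comp _ _)).trans ?_
  exact (Category.assoc _ _ _).symm

theorem td_Spec_lt (R : CommRingCat.{u}) (s : Spec R ⟶ Spec (CommRingCat.of k))
    [LocallyOfFiniteType s] (p q : PrimeSpectrum R) (h : p ≤ q) (hne : p ≠ q) : td s q < td s p := by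
  obtain ⟨φ, rfl⟩ := Spec.map_surjective s
  have hφ : φ.hom.FiniteType := HasRingHomProperty.Spec_iff (P := @LocallyOfFiniteType).1 ‹_›
  rw [td_Spec, td_Spec]
  let _ := φ.hom.toAlgebra
  have : Algebra.FiniteType k R := hφ
  refine aux_trdeg_prime_lt (k := k) (A := R) p.asIdeal q.asIdeal ?_
  exact lt_of_le_of_ne h (by
    exact fun h => hne (PrimeSpectrum.ext h))

theorem td_Spec_le (R : CommRingCat.{u}) (s : Spec R ⟶ Spec (CommRingCat.of k))
    [LocallyOfFiniteType s] (p : PrimeSpectrum R) : ((td s p : ℕ) : WithBot ℕ∞) ≤ topologicalKrullDim (Spec R) := by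
  obtain ⟨φ, rfl⟩ := Spec.map_surjective s
  have hφ : φ.hom.FiniteType := HasRingHomProperty.Spec_iff (P := @LocallyOfFiniteType).1 ‹_›
  rw [td_Spec]
  let _ := φ.hom.toAlgebra
  have : Algebra.FiniteType k R := hφ
  refine (aux_trdeg_prime_le (k := k) (A := R) p.asIdeal).trans ?_
  exact (PrimeSpectrum.topologicalKrullDim_eq_ringKrullDim R).ge

theorem td_lt {X : Scheme.{u}} (s : X ⟶ Spec (CommRingCat.of k)) [LocallyOfFiniteType s]
    (x y : X) (h : x ⤳ y) (hne : x ≠ y) : td s y < td s x := by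
  obtain ⟨R, j, hj, ⟨y, rfl⟩, -⟩ := Scheme.exists_affine_mem_range_and_range_subset (x := y)
    (U := ⊤) trivial
  obtain ⟨x, rfl⟩ : x ∈ Set.range j := 
    h.mem_open j.opensRange.2 ⟨y, rfl⟩
  rw [← (sameRes_of_isImmersion (sY := s) j rfl x).td_eq,
    ← (sameRes_of_isImmersion (sY := s) j rfl y).td_eq]
  exact td_Spec_lt _ _ _ _ ((PrimeSpectrum.le_iff_specializes _ _).2 (j.isOpenEmbedding.isInducing.specializes_iff.1 h)) (by rintro rfl; simp at hne)

theorem td_le {X : Scheme.{u}} (s : X ⟶ Spec (CommRingCat.of k)) [LocallyOfFiniteType s]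
    (y : X) : ((td s y : ℕ) : WithBot ℕ∞) ≤ topologicalKrullDim X := by
  obtain ⟨R, j, hj, ⟨y, rfl⟩, -⟩ := Scheme.exists_affine_mem_range_and_range_subset (x := y)
    (U := ⊤) trivial
  rw [← (sameRes_of_isImmersion (sY := s) j rfl y).td_eq]
  exact (td_Spec_le _ _ _).trans (j.isOpenEmbedding.isInducing.topologicalKrullDim_le)

theorem exists_td_ge {X : Scheme.{u}} (s : X ⟶ Spec (CommRingCat.of k)) [LocallyOfFiniteType s]
    (Z : Set X) (hZ : IsClosed Z) (n : ℕ) (h : (n : WithBot ℕ∞) ≤ topologicalKrullDim Z) :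
    ∃ z ∈ Z, n ≤ td s z := by
  have := hZ.isClosedEmbedding_subtypeVal.quasiSober
  unfold topologicalKrullDim at h
  obtain ⟨l, hl⟩ := Order.le_krullDim_iff.1 h
  have hsp (a b : TopologicalSpace.IrreducibleCloseds Z) (hab : a < b) :
     td s (a.isIrreducible.genericPoint).1 < td s (b.isIrreducible.genericPoint).1 := by
    have ha := a.isIrreducible.isGenericPoint_genericPoint_closure
    have hb := b.isIrreducible.isGenericPoint_genericPoint_closure
    rw [a.isClosed.closure_eq] at ha
    rw [b.isClosed.closure_eq] at hb
    apply td_lt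
    · refine (subtype_specializes_iff _ _).1 ?_
      exact hb.specializes (hab.le ha.mem)
    · intro e
      have e := Subtype.ext e
      rw [e] at hb
      apply hab.ne
      ext1
      exact ha.def.symm.trans hb.def
  let f : LTSeries ℕ := l.map (fun a => td s (a.isIrreducible.genericPoint).1) hsp
  refine ⟨_, (l.last.isIrreducible.genericPoint).2, ?_⟩
  have := LTSeries.apply_add_index_le_apply_add_index_nat f 0 (Fin.last _) (Fin.zero_le _)
  have h2 : f (Fin.last _) = td s (l.last.isIrreducible.genericPoint).1 := rfl
  have h3 : f.length = n := hl
  simp [h3] at this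
  rw [← h2]
  omega

end PartB

section PartC

/-- The closed point of the spectrum of a local ring, as a point of the scheme. -/
def cpt (R : CommRingCat.{u}) [IsLocalRing R] : Spec R := IsLocalRing.closedPoint R

theorem fromSpecStalk_cpt {X : Scheme.{u}} (x : X) :
    X.fromSpecStalk x (cpt (X.presheaf.stalk x)) = x := Scheme.fromSpecStalk_closedPoint

theorem spread_L {U W : Scheme.{u}} (f : U ⟶ W) (g : W ⟶ U) (h : f ≫ g = 𝟙 U) (V : W.Opens)
    (hV : V.ι ≫ g ≫ f = V.ι) : IsOpenImmersion ((f ⁻¹ᵁ V).ι ≫ f) := by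
  have hr : Set.range (V.ι ≫ g) ⊆ Set.range (f ⁻¹ᵁ V).ι := by
    rintro _ ⟨v, rfl⟩
    have : f ((V.ι ≫ g) v) = V.ι v := by
      rw [← Scheme.Hom.comp_apply, Category.assoc, hV]
    simp only [Scheme.Opens.range_ι]
    change f ((V.ι ≫ g) v) ∈ V
    rw [this]
    exact v.2
  have h1 : f ∣_ V ≫ IsOpenImmersion.lift (f ⁻¹ᵁ V).ι (V.ι ≫ g) hr = 𝟙 _ := by
    rw [← cancel_mono (f ⁻¹ᵁ V).ι]
    simp [h]
  have h2 : IsOpenImmersion.lift (f ⁻¹ᵁ V).ι (V.ι ≫ g) hr ≫ f ∣_ V = 𝟙 _ := by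
    rw [← cancel_mono V.ι]
    simp [hV]
  have : IsIso (f ∣_ V) := ⟨_, h1, h2⟩
  rw [← morphismRestrict_ι]
  infer_instance

theorem spread_TL {R : CommRingCat.{u}} [IsLocalRing R] {U W : Scheme.{u}} (t : Spec R ⟶ U)
    (j : W ⟶ U) [IsOpenImmersion j] (h : t (cpt R) ∈ Set.range j) :
    ∃ t' : Spec R ⟶ W, t' ≫ j = t := by
  refine ⟨IsOpenImmersion.lift j t ?_, IsOpenImmersion.lift_fac _ _ _⟩
  rintro _ ⟨z, rfl⟩
  have : z ⤳ cpt R := IsLocalRing.specializes_closedPoint z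
  exact (this.map t.continuous).mem_open j.opensRange.2 h

theorem spread_SU {X U Z : Scheme.{u}} [IsLocallyNoetherian X] (j : U ⟶ X) [IsOpenImmersion j]
    (x : X) (t : Spec (X.presheaf.stalk x) ⟶ U) (ht : t ≫ j = X.fromSpecStalk x)
    (a b : U ⟶ Z) (hab : t ≫ a = t ≫ b) :
    ∃ W : U.Opens, t (cpt _) ∈ W ∧ W.ι ≫ a = W.ι ≫ b := by
  have : IsLocallyNoetherian U := isLocallyNoetherian_of_isOpenImmersion j
  obtain ⟨u, hu⟩ : ∃ u, u = t (cpt _) := ⟨_, rfl⟩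
  have hx : j u = x := by
    rw [hu, ← Scheme.Hom.comp_apply, ht, fromSpecStalk_cpt]
  subst hx
  rw [← hu]
  apply spread_out_unique_of_isGermInjective'
  have : U.fromSpecStalk u = Spec.map (j.stalkMap u) ≫ t := by
    rw [← cancel_mono j, Category.assoc, ht, Scheme.SpecMap_stalkMap_fromSpecStalk]
  rw [this, Category.assoc, Category.assoc, hab]

theorem spread_SO {S X Y : Scheme.{u}} [IsLocallyNoetherian X] (sX : X ⟶ S) (sY : Y ⟶ S)
    [LocallyOfFiniteType sY] (x : X) (φ : Spec (X.presheaf.stalk x) ⟶ Y)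
    (h : φ ≫ sY = X.fromSpecStalk x ≫ sX) :
    ∃ (U : Scheme.{u}) (j : U ⟶ X) (_ : IsOpenImmersion j) (t : Spec (X.presheaf.stalk x) ⟶ U)
      (f : U ⟶ Y), t ≫ j = X.fromSpecStalk x ∧ t ≫ f = φ ∧ f ≫ sY = j ≫ sX := by
  obtain ⟨U, hxU, f, h1, h2⟩ := spread_out_of_isGermInjective' sX sY φ h
  exact ⟨U, U.ι, inferInstance, U.fromSpecStalkOfMem x hxU, f, by simp, h1.symm, h2⟩

theorem spread_main {S X Y : Scheme.{u}} [IsLocallyNoetherian X] [IsLocallyNoetherian Y]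
    (sX : X ⟶ S) (sY : Y ⟶ S)
    [LocallyOfFiniteType sX] [LocallyOfFiniteType sY] (x : X) (y : Y)
    (φ : Spec (X.presheaf.stalk x) ≅ Spec (Y.presheaf.stalk y))
    (hφ : φ.hom (cpt _) = cpt _)
    (h : φ.hom ≫ Y.fromSpecStalk y ≫ sY = X.fromSpecStalk x ≫ sX) :
    ∃ (P : Scheme.{u}) (jX : P ⟶ X) (jY : P ⟶ Y), IsOpenImmersion jX ∧ IsOpenImmersion jY ∧
      jX ≫ sX = jY ≫ sY ∧ x ∈ Set.range jX ∧ y ∈ Set.range jY := by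
  have hφ' : φ.inv (cpt _) = cpt _ := by
    rw [← hφ, ← Scheme.Hom.comp_apply]; simp
  obtain ⟨U0, j, hj, t, f0, hj1, hf0, hf0s⟩ := spread_SO sX sY x (φ.hom ≫ Y.fromSpecStalk y)
    (by simpa using h)
  obtain ⟨V0, l, hl, r, g0, hl1, hg0, hg0s⟩ := spread_SO sY sX y (φ.inv ≫ X.fromSpecStalk x)
    (by rw [Category.assoc, ← h]; simp)
  -- shrink so that `f` lands in `V0`
  let U1 := f0 ⁻¹ᵁ l.opensRange
  obtain ⟨t1, ht1⟩ := spread_TL t U1.ι (by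
    rw [Scheme.Opens.range_ι]
    change f0 (t _) ∈ Set.range l
    rw [← Scheme.Hom.comp_apply, hf0, ← hl1, ← Category.assoc, Scheme.Hom.comp_apply]
    exact ⟨_, rfl⟩)
  let f1 : U1.toScheme ⟶ V0 := IsOpenImmersion.lift l (U1.ι ≫ f0) (by
    rintro _ ⟨v, rfl⟩
    exact v.2)
  have hf1 : f1 ≫ l = U1.ι ≫ f0 := IsOpenImmersion.lift_fac _ _ _
  have htf1 : t1 ≫ f1 = φ.hom ≫ r := by
    rw [← cancel_mono l, Category.assoc, hf1, reassoc_of% ht1, hf0, Category.assoc, hl1]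
  obtain ⟨W, hW1, hW2⟩ := spread_SU (U1.ι ≫ j) x t1 (by rw [reassoc_of% ht1, hj1]) (f1 ≫ g0)
    (U1.ι ≫ j) (by rw [reassoc_of% htf1, hg0, reassoc_of% ht1, hj1]; simp)
  obtain ⟨t2, ht2⟩ := spread_TL t1 W.ι (by rw [Scheme.Opens.range_ι]; exact hW1)
  obtain ⟨j2, hj2⟩ : ∃ j2 : W.toScheme ⟶ X, j2 = W.ι ≫ U1.ι ≫ j := ⟨_, rfl⟩
  have hj2o : IsOpenImmersion j2 := by rw [hj2]; infer_instance
  obtain ⟨f2, hf2⟩ : ∃ f2 : W.toScheme ⟶ V0, f2 = W.ι ≫ f1 := ⟨_, rfl⟩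
  have hfg : f2 ≫ g0 = j2 := by rw [hf2, hj2, Category.assoc, hW2]
  have htj2 : t2 ≫ j2 = X.fromSpecStalk x := by
    rw [hj2, reassoc_of% ht2, reassoc_of% ht1, hj1]
  have htf2 : t2 ≫ f2 = φ.hom ≫ r := by rw [hf2, reassoc_of% ht2, htf1]
  -- shrink `V0`
  let V2 := g0 ⁻¹ᵁ j2.opensRange
  let f3 : W.toScheme ⟶ V2.toScheme := IsOpenImmersion.lift V2.ι f2 (by
    rintro _ ⟨v, rfl⟩
    rw [Scheme.Opens.range_ι]
    change g0 (f2 v) ∈ Set.range j2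
    rw [← Scheme.Hom.comp_apply, hfg]
    exact ⟨_, rfl⟩)
  have hf3 : f3 ≫ V2.ι = f2 := IsOpenImmersion.lift_fac _ _ _
  let g3 : V2.toScheme ⟶ W.toScheme := IsOpenImmersion.lift j2 (V2.ι ≫ g0) (by
    rintro _ ⟨v, rfl⟩
    exact v.2)
  have hg3 : g3 ≫ j2 = V2.ι ≫ g0 := IsOpenImmersion.lift_fac _ _ _
  have hfg3 : f3 ≫ g3 = 𝟙 _ := by
    rw [← cancel_mono j2, Category.assoc, hg3, reassoc_of% hf3, hfg, Category.id_comp]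
  obtain ⟨V3, hV3, hV3'⟩ := spread_SU (V2.ι ≫ l) y (φ.inv ≫ t2 ≫ f3)
    (by simp only [Category.assoc]; rw [reassoc_of% hf3, reassoc_of% htf2, hl1]; simp)
    (g3 ≫ f3) (𝟙 _) (by simp only [Category.assoc]; rw [reassoc_of% hfg3]; simp)
  have hfin : f3 (t2 (cpt _)) ∈ V3 := by
    rw [Scheme.Hom.comp_apply, Scheme.Hom.comp_apply, hφ'] at hV3
    exact hV3
  have hfin' : t2 (cpt _) ∈ f3 ⁻¹ᵁ V3 := hfin
  obtain ⟨w, hw⟩ : ∃ w, (f3 ⁻¹ᵁ V3).ι w = t2 (cpt _) := by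
    have : t2 (cpt _) ∈ Set.range (f3 ⁻¹ᵁ V3).ι := by rw [Scheme.Opens.range_ι]; exact hfin'
    exact this
  have hopen := spread_L f3 g3 hfg3 V3 (by simpa using hV3')
  refine ⟨f3 ⁻¹ᵁ V3, (f3 ⁻¹ᵁ V3).ι ≫ j2, ((f3 ⁻¹ᵁ V3).ι ≫ f3) ≫ V2.ι ≫ l, inferInstance,
    inferInstance, ?_, ?_, ?_⟩
  · simp only [Category.assoc]
    rw [← hg0s, reassoc_of% hf3, reassoc_of% hfg]
  · refine ⟨w, ?_⟩
    rw [Scheme.Hom.comp_apply, hw, ← Scheme.Hom.comp_apply, htj2, fromSpecStalk_cpt]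
  · refine ⟨w, ?_⟩
    rw [Category.assoc, reassoc_of% hf3, Scheme.Hom.comp_apply, hw,
      ← Scheme.Hom.comp_apply, reassoc_of% htf2, hl1, Scheme.Hom.comp_apply, hφ, fromSpecStalk_cpt]

end PartC

section PartD

theorem isIso_residue {X : Scheme.{u}} [IsReduced X] (x : X) (hx : ∀ y : X, y ⤳ x → y = x) :
    IsIso (X.residue x) := by
  refine (ConcreteCategory.isIso_iff_bijective _).2 ⟨?_, X.residue_surjective x⟩
  refine (injective_iff_map_eq_zero (X.residue x).hom).2 fun a ha => ?_
  have ha' : a ∈ IsLocalRing.maximalIdeal (X.presheaf.stalk x) :=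
    Ideal.Quotient.eq_zero_iff_mem.1 ha
  have : IsNilpotent a := by
    rw [← mem_nilradical, nilradical_eq_sInf, Ideal.mem_sInf]
    intro p hp
    have hq : ∀ q : Spec (X.presheaf.stalk x), q = cpt _ := by
      intro q
      have h0 : q ⤳ cpt (X.presheaf.stalk x) := IsLocalRing.specializes_closedPoint q
      have h1 := h0.map (X.fromSpecStalk x).continuous
      rw [fromSpecStalk_cpt] at h1
      have h2 := hx _ h1
      apply (X.fromSpecStalk x).isEmbedding.injective
      rw [h2, fromSpecStalk_cpt]
    have hp' : p.IsPrime := hp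
    have h3 : (⟨p, hp'⟩ : PrimeSpectrum _) = IsLocalRing.closedPoint _ := hq ⟨p, hp'⟩
    have h4 : p = IsLocalRing.maximalIdeal _ := congrArg PrimeSpectrum.asIdeal h3
    rwa [h4]
  exact this.eq_zero

variable {k : Type u} [Field k]

theorem spread_sameRes {X Y : Scheme.{u}} [IsLocallyNoetherian X] [IsLocallyNoetherian Y]
    [IsReduced X] [IsReduced Y]
    (sX : X ⟶ Spec (CommRingCat.of k)) (sY : Y ⟶ Spec (CommRingCat.of k))
    [LocallyOfFiniteType sX] [LocallyOfFiniteType sY] (x : X) (y : Y)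
    (hx : ∀ y : X, y ⤳ x → y = x) (hy : ∀ x : Y, x ⤳ y → x = y)
    (h : SameRes sX x sY y) :
    ∃ (P : Scheme.{u}) (jX : P ⟶ X) (jY : P ⟶ Y), IsOpenImmersion jX ∧ IsOpenImmersion jY ∧
      jX ≫ sX = jY ≫ sY ∧ x ∈ Set.range jX ∧ y ∈ Set.range jY := by
  obtain ⟨e, he⟩ := h
  have := isIso_residue x hx
  have := isIso_residue y hy
  let E : Y.presheaf.stalk y ≅ X.presheaf.stalk x :=
    asIso (Y.residue y) ≪≫ e.symm ≪≫ (asIso (X.residue x)).symm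
  refine spread_main sX sY x y ⟨Spec.map E.hom, Spec.map E.inv, ?_, ?_⟩ ?_ ?_
  · rw [← Spec.map_comp, E.inv_hom_id, Spec.map_id]
  · rw [← Spec.map_comp, E.hom_inv_id, Spec.map_id]
  · exact IsLocalRing.comap_closedPoint E.hom.hom
  · change Spec.map E.hom ≫ _ = _
    rw [← cancel_epi (Spec.map (X.residue x)), ← Spec.map_comp_assoc]
    have : E.hom ≫ X.residue x = Y.residue y ≫ e.inv := by simp [E]
    rw [this, Spec.map_comp_assoc]
    have h1 := kx_spec sX x
    have h2 := kx_spec sY y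
    rw [Scheme.fromSpecResidueField, Category.assoc] at h1 h2
    rw [← h1, ← h2, ← Spec.map_comp, ← he]
    simp

end PartD

section PartE

theorem aux_match {α β Q : Type*} [Finite α] [Finite β] (f : α → Q) (g : β → Q)
    (h : ∀ q, Nat.card {a // f a = q} = Nat.card {b // g b = q}) :
    ∃ e : α ≃ β, ∀ a, g (e a) = f a := by
  have h' : ∀ q, Nonempty ({a // f a = q} ≃ {b // g b = q}) := fun q => Finite.card_eq.1 (h q)
  let E := fun q => (h' q).some
  let e := (Equiv.sigmaFiberEquiv f).symm.trans
    ((Equiv.sigmaCongrRight E).trans (Equiv.sigmaFiberEquiv g))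
  refine ⟨e, fun a => ?_⟩
  exact (E (f a) ⟨a, rfl⟩).2

theorem mem_genericPoints_of {α : Type*} [TopologicalSpace α] [QuasiSober α] (x : α)
    (hx : ∀ y : α, y ⤳ x → y = x) : x ∈ genericPoints α := by
  obtain ⟨u, hu, hxu⟩ := exists_mem_irreducibleComponents_subset_of_isIrreducible (closure {x})
    isIrreducible_singleton.closure
  have hc := isClosed_of_mem_irreducibleComponents u hu
  have hg := hu.1.isGenericPoint_genericPoint hc
  have := hx _ (hg.specializes (hxu (subset_closure rfl)))
  change closure {x} ∈ irreducibleComponents α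
  rw [this] at hg
  rwa [hg.def]

/-- points only on one component -/
def onlyOn {α : Type*} [TopologicalSpace α] (x : α) : Set α :=
  (⋃₀ (irreducibleComponents α \ {closure {x}}))ᶜ

theorem onlyOn_isOpen {α : Type*} [TopologicalSpace α] [TopologicalSpace.NoetherianSpace α] (x : α) :
    IsOpen (onlyOn x) := by
  rw [onlyOn, isOpen_compl_iff, Set.sUnion_eq_biUnion]
  refine Set.Finite.isClosed_biUnion
    (TopologicalSpace.NoetherianSpace.finite_irreducibleComponents.subset Set.sdiff_subset) ?_
  intro i hi
  exact isClosed_of_mem_irreducibleComponents _ hi.1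

theorem onlyOn_self {α : Type*} [TopologicalSpace α] (x : α) (hx : x ∈ genericPoints α) :
    x ∈ onlyOn x := by
  rintro ⟨Z, ⟨hZ, hZ'⟩, hxZ⟩
  apply hZ'
  have h1 : closure {x} ⊆ Z :=
    closure_minimal (by simpa using hxZ) (isClosed_of_mem_irreducibleComponents _ hZ)
  exact (h1.antisymm (hx.2 hZ.1 h1)).symm

theorem onlyOn_disj {α : Type*} [TopologicalSpace α] [T0Space α] (x y : α) (h : x ≠ y) :
    Disjoint (onlyOn x) (onlyOn y) := by
  rw [Set.disjoint_left]
  intro z hx hy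
  have hz : z ∈ ⋃₀ irreducibleComponents α := by rw [sUnion_irreducibleComponents]; trivial
  obtain ⟨Z, hZ, hzZ⟩ := hz
  have h1 : ∀ w, z ∈ onlyOn w → Z = closure {w} := by
    intro w hw
    by_contra hne
    exact hw ⟨Z, ⟨hZ, hne⟩, hzZ⟩
  apply h
  have := (h1 x hx).symm.trans (h1 y hy)
  exact (inseparable_iff_closure_eq.2 this).eq

variable {k : Type u} [Field k]

theorem Variety.isNoetherian (V : Variety k) : IsNoetherian V.toScheme := by
  have := V.locallyOfFiniteType
  have := V.quasiCompact
  have := LocallyOfFiniteType.isLocallyNoetherian V.str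
  have := QuasiCompact.compactSpace_of_compactSpace V.str
  exact {}

theorem Variety.td_le_dim (V : Variety k) (x : V.toScheme) : ((td V.str x : ℕ) : WithBot ℕ∞) ≤ V.dim := by
  have := V.locallyOfFiniteType
  exact td_le V.str x

theorem Variety.td_le_nat (V : Variety k) (n : ℕ) (hV : V.dim ≤ n) (x : V.toScheme) :
    td V.str x ≤ n := by
  have := (V.td_le_dim x).trans hV
  exact_mod_cast this

theorem Variety.top_max (V : Variety k) (n : ℕ) (hV : V.dim ≤ n) (x : V.toScheme)
    (hx : td V.str x = n) (y : V.toScheme) (h : y ⤳ x) : y = x := by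
  have := V.locallyOfFiniteType
  by_contra hne
  have h1 := td_lt V.str _ _ h hne
  have h2 := V.td_le_nat n hV y
  omega

theorem Variety.top_generic (V : Variety k) (n : ℕ) (hV : V.dim ≤ n) (x : V.toScheme)
    (hx : td V.str x = n) : x ∈ genericPoints V.toScheme :=
  mem_genericPoints_of x (V.top_max n hV x hx)

theorem Variety.top_finite (V : Variety k) (n : ℕ) (hV : V.dim ≤ n) :
    {x : V.toScheme | td V.str x = n}.Finite := by
  have := V.isNoetherian
  refine (genericPoints.finite
    (TopologicalSpace.NoetherianSpace.finite_irreducibleComponents (α := V.toScheme))).subset ?_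
  exact fun x hx => V.top_generic n hV x hx

/-- the points of `V` with given residue field -/
def resSet {X : Scheme.{u}} (s : X ⟶ Spec (CommRingCat.of k)) (x : X) (V : Variety k) :
    Set V.toScheme := {v | SameRes s x V.str v}

theorem resSet_finite {X : Scheme.{u}} (s : X ⟶ Spec (CommRingCat.of k)) (x : X) (V : Variety k)
    (hV : V.dim ≤ td s x) : (resSet s x V).Finite :=
  (V.top_finite _ hV).subset fun _ hv => (SameRes.td_eq hv).symm

theorem resSet_empty {X : Scheme.{u}} (s : X ⟶ Spec (CommRingCat.of k)) (x : X) (V : Variety k)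
    (hV : V.dim < td s x) : resSet s x V = ∅ := by
  ext v
  simp only [Set.mem_empty_iff_false, iff_false]
  intro hv
  have h1 := SameRes.td_eq hv
  have := V.td_le_dim v
  rw [← h1] at this
  exact absurd (this.trans_lt hV) (lt_irrefl _)

theorem resSet_image {X : Scheme.{u}} (s : X ⟶ Spec (CommRingCat.of k)) (x : X) (V W : Variety k)
    (f : V.toScheme ⟶ W.toScheme) [IsPreimmersion f] (hf : f ≫ W.str = V.str) :
    f '' resSet s x V = resSet s x W ∩ Set.range f := by
  ext w
  constructor
  · rintro ⟨v, hv, rfl⟩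
    exact ⟨SameRes.trans hv (sameRes_of_isImmersion f hf v), v, rfl⟩
  · rintro ⟨hw, v, rfl⟩
    exact ⟨v, SameRes.trans hw (sameRes_of_isImmersion f hf v).symm, rfl⟩

theorem resSet_ncard {X : Scheme.{u}} (s : X ⟶ Spec (CommRingCat.of k)) (x : X) (V W : Variety k)
    (f : V.toScheme ⟶ W.toScheme) [IsPreimmersion f] (hf : f ≫ W.str = V.str) :
    (resSet s x V).ncard = (resSet s x W ∩ Set.range f).ncard := by
  rw [← resSet_image s x V W f hf, Set.ncard_image_of_injective _ f.isEmbedding.injective]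

theorem count_eq (n : ℕ) (X Y : Variety k) (hX : X.dim ≤ (n : WithBot ℕ∞))
    (hY : Y.dim ≤ (n : WithBot ℕ∞)) (h : K0graded.cls n X hX = K0graded.cls n Y hY)
    {Z : Scheme.{u}} (s : Z ⟶ Spec (CommRingCat.of k)) (z : Z) (hz : td s z = n) :
    (resSet s z X).ncard = (resSet s z Y).ncard := by
  subst hz
  let F : FreeAbelianGroup {V : Variety k // V.dim ≤ (td s z : WithBot ℕ∞)} →+ ℤ :=
    FreeAbelianGroup.lift fun V => ((resSet s z V.1).ncard : ℤ)
  have hF : ∀ V, F (FreeAbelianGroup.of V) = ((resSet s z V.1).ncard : ℤ) := fun V =>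
    FreeAbelianGroup.lift_apply_of _ _
  have h1 := QuotientAddGroup.eq.1 h
  have h2 : AddSubgroup.closure (cutRel (fun V : Variety k => V.dim ≤ (td s z : WithBot ℕ∞)) ∪
      {a | ∃ X : {V : Variety k // V.dim ≤ (td s z : WithBot ℕ∞)},
        X.1.dim < (td s z : WithBot ℕ∞) ∧ a = FreeAbelianGroup.of X}) ≤ F.ker := by
    rw [AddSubgroup.closure_le]
    rintro a ((⟨A, B, ⟨e, he⟩, rfl⟩ | ⟨A, B, U, i, j, hi, hj, hi', hj', hr, rfl⟩) | ⟨A, hA, rfl⟩)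
    · rw [SetLike.mem_coe, AddMonoidHom.mem_ker, map_sub, hF, hF, resSet_ncard s z _ _ e.hom he]
      have : Set.range e.hom = Set.univ := e.hom.surjective.range_eq
      rw [this, Set.inter_univ, sub_self]
    · rw [SetLike.mem_coe, AddMonoidHom.mem_ker, map_sub, map_sub, hF, hF, hF,
        resSet_ncard s z _ _ i hi', resSet_ncard s z _ _ j hj']
      have hr' : Set.range j = (Set.range i)ᶜ := hr
      rw [hr', ← Set.sdiff_eq]
      have := Set.ncard_inter_add_ncard_sdiff_eq_ncard (resSet s z A.1) (Set.range i)
        (resSet_finite s z A.1 A.2)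
      omega
    · rw [SetLike.mem_coe, AddMonoidHom.mem_ker, hF, resSet_empty s z _ hA]
      simp
  have h3 := h2 h1
  rw [AddMonoidHom.mem_ker, map_add, map_neg, hF, hF] at h3
  simp only at h3
  omega

theorem exists_matching (n : ℕ) (X Y : Variety k) (hX : X.dim ≤ (n : WithBot ℕ∞))
    (hY : Y.dim ≤ (n : WithBot ℕ∞)) (h : K0graded.cls n X hX = K0graded.cls n Y hY) :
    ∃ e : {x : X.toScheme // td X.str x = n} ≃ {y : Y.toScheme // td Y.str y = n},
      ∀ x, SameRes X.str x.1 Y.str (e x).1 := by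
  have : Finite {x : X.toScheme // td X.str x = n} := (X.top_finite n hX).to_subtype
  have : Finite {x : Y.toScheme // td Y.str x = n} := (Y.top_finite n hY).to_subtype
  let cl (V : Variety k) (v : V.toScheme) : Set (Σ W : Variety k, W.toScheme) :=
    {p | SameRes V.str v p.1.str p.2}
  have hcl (V W : Variety k) (v : V.toScheme) (w : W.toScheme) :
      cl V v = cl W w ↔ SameRes W.str w V.str v := by
    constructor
    · intro h
      have : (⟨V, v⟩ : Σ W : Variety k, W.toScheme) ∈ cl V v := SameRes.refl _ _
      rw [h] at this
      exact this
    · intro h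
      ext p
      exact ⟨fun h' => SameRes.trans h h', fun h' => SameRes.trans h.symm h'⟩
  have hfib (V W : Variety k) (w : W.toScheme) (hw : td W.str w = n) :
      Nat.card {a : {x : V.toScheme // td V.str x = n} // cl V a.1 = cl W w} =
        (resSet W.str w V).ncard := by
    rw [← Nat.card_coe_set_eq]
    refine Nat.card_congr ⟨fun a => ⟨a.1.1, (hcl _ _ _ _).1 a.2⟩,
      fun v => ⟨⟨v.1, (SameRes.td_eq v.2).symm.trans hw⟩, (hcl _ _ _ _).2 v.2⟩, ?_, ?_⟩
    · intro a; rfl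
    · intro a; rfl
  obtain ⟨e, he⟩ := aux_match (fun x : {x : X.toScheme // td X.str x = n} => cl X x.1)
    (fun y : {y : Y.toScheme // td Y.str y = n} => cl Y y.1) (by
      intro q
      by_cases hq : ∃ (W : Variety k) (w : W.toScheme), td W.str w = n ∧ cl W w = q
      · obtain ⟨W, w, hw, rfl⟩ := hq
        rw [hfib X W w hw, hfib Y W w hw]
        exact count_eq n X Y hX hY h W.str w hw
      · have h1 : IsEmpty {x : {x : X.toScheme // td X.str x = n} // cl X x.1 = q} :=
          ⟨fun x => hq ⟨X, x.1.1, x.1.2, x.2⟩⟩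
        have h2 : IsEmpty {x : {x : Y.toScheme // td Y.str x = n} // cl Y x.1 = q} :=
          ⟨fun x => hq ⟨Y, x.1.1, x.1.2, x.2⟩⟩
        simp)
  exact ⟨e, fun x => (hcl _ _ _ _).1 (he x)⟩

end PartE

section PartF

variable {k : Type u} [Field k]

/-- An open subscheme of a variety, as a variety. -/
def Variety.ofOpen (X : Variety k) {U : Scheme.{u}} (j : U ⟶ X.toScheme) [IsOpenImmersion j] :
    Variety k where
  toScheme := U
  str := j ≫ X.str
  reduced := by
    have := X.reduced
    exact isReduced_of_isOpenImmersion j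
  separated := by
    have := X.separated
    infer_instance
  locallyOfFiniteType := by
    have := X.locallyOfFiniteType
    infer_instance
  quasiCompact := by
    have := X.quasiCompact
    have := X.isNoetherian
    infer_instance

theorem pieces (n : ℕ) (X Y : Variety k) (hX : X.dim ≤ (n : WithBot ℕ∞))
    (hY : Y.dim ≤ (n : WithBot ℕ∞)) (x : X.toScheme) (y : Y.toScheme)
    (hx : td X.str x = n) (hy : td Y.str y = n) (h : SameRes X.str x Y.str y) :
    ∃ (P : Scheme.{u}) (jX : P ⟶ X.toScheme) (jY : P ⟶ Y.toScheme),
      IsOpenImmersion jX ∧ IsOpenImmersion jY ∧ jX ≫ X.str = jY ≫ Y.str ∧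
      x ∈ Set.range jX ∧ y ∈ Set.range jY ∧ Set.range jX ⊆ onlyOn x ∧ Set.range jY ⊆ onlyOn y := by
  have := X.isNoetherian
  have := Y.isNoetherian
  have := X.reduced
  have := Y.reduced
  have := X.locallyOfFiniteType
  have := Y.locallyOfFiniteType
  let A : X.toScheme.Opens := ⟨onlyOn x, onlyOn_isOpen x⟩
  let B : Y.toScheme.Opens := ⟨onlyOn y, onlyOn_isOpen y⟩
  have hA : Set.range A.ι = onlyOn x := A.range_ι
  have hB : Set.range B.ι = onlyOn y := B.range_ι
  obtain ⟨a, ha⟩ : x ∈ Set.range A.ι := hA ▸ onlyOn_self x (X.top_generic n hX x hx)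
  obtain ⟨b, hb⟩ : y ∈ Set.range B.ι := hB ▸ onlyOn_self y (Y.top_generic n hY y hy)
  have hsa : SameRes (A.ι ≫ X.str) a X.str x := by
    have := sameRes_of_isImmersion (sY := X.str) A.ι rfl a
    rwa [ha] at this
  have hsb : SameRes (B.ι ≫ Y.str) b Y.str y := by
    have := sameRes_of_isImmersion (sY := Y.str) B.ι rfl b
    rwa [hb] at this
  have hNA : IsLocallyNoetherian A.toScheme := isLocallyNoetherian_of_isOpenImmersion A.ι
  have hNB : IsLocallyNoetherian B.toScheme := isLocallyNoetherian_of_isOpenImmersion B.ι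
  have hRA : IsReduced A.toScheme := isReduced_of_isOpenImmersion A.ι
  have hRB : IsReduced B.toScheme := isReduced_of_isOpenImmersion B.ι
  obtain ⟨P, jX, jY, h1, h2, h3, ⟨p, hp⟩, ⟨q, hq⟩⟩ :=
    spread_sameRes (A.ι ≫ X.str) (B.ι ≫ Y.str) a b
    (by
      intro a' ha'
      apply A.ι.isEmbedding.injective
      rw [ha]
      refine X.top_max n hX x hx _ ?_
      rw [← ha]
      exact ha'.map A.ι.continuous)
    (by
      intro a' ha'
      apply B.ι.isEmbedding.injective
      rw [hb]
      refine Y.top_max n hY y hy _ ?_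
      rw [← hb]
      exact ha'.map B.ι.continuous)
    (hsa.trans (h.trans hsb.symm))
  refine ⟨P, jX ≫ A.ι, jY ≫ B.ι, inferInstance, inferInstance, by simpa using h3,
    ⟨p, ?_⟩, ⟨q, ?_⟩, ?_, ?_⟩
  · rw [Scheme.Hom.comp_apply, hp, ha]
  · rw [Scheme.Hom.comp_apply, hq, hb]
  · rintro _ ⟨z, rfl⟩
    rw [Scheme.Hom.comp_apply, ← hA]
    exact ⟨_, rfl⟩
  · rintro _ ⟨z, rfl⟩
    rw [Scheme.Hom.comp_apply, ← hB]
    exact ⟨_, rfl⟩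

theorem compl_dim (n : ℕ) (X : Variety k) (hX : X.dim ≤ (n : WithBot ℕ∞))
    (U : X.toScheme.Opens) (hU : ∀ x, td X.str x = n → x ∈ U) :
    topologicalKrullDim ((Set.range U.ι.base)ᶜ : Set X.toScheme) < (n : WithBot ℕ∞) := by
  by_contra hlt
  rw [not_lt] at hlt
  have := X.locallyOfFiniteType
  have hr : Set.range U.ι.base = (U : Set X.toScheme) := U.range_ι
  obtain ⟨z, hz, hzn⟩ := exists_td_ge X.str _ (by rw [hr]; exact U.2.isClosed_compl) n hlt
  rw [hr] at hz
  exact hz (hU z (le_antisymm (X.td_le_nat n hX z) hzn))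

theorem lift_range {X P : Scheme.{u}} (U : X.Opens) (f : P ⟶ X) [IsOpenImmersion f]
    (hf : Set.range f ⊆ Set.range U.ι) :
    Set.range (IsOpenImmersion.lift U.ι f hf) = U.ι ⁻¹' Set.range f := by
  ext z
  constructor
  · rintro ⟨p, rfl⟩
    exact ⟨p, by rw [← Scheme.Hom.comp_apply, IsOpenImmersion.lift_fac]⟩
  · rintro ⟨p, hp⟩
    refine ⟨p, U.ι.isEmbedding.injective ?_⟩
    rw [← Scheme.Hom.comp_apply, IsOpenImmersion.lift_fac, hp]

theorem main_aux (n : ℕ) (X Y : Variety k)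
    (hX : X.dim ≤ (n : WithBot ℕ∞)) (hY : Y.dim ≤ (n : WithBot ℕ∞))
    (h : K0graded.cls n X hX = K0graded.cls n Y hY) :
    ∃ (U V : Variety k) (jU : U.toScheme ⟶ X.toScheme) (jV : V.toScheme ⟶ Y.toScheme),
      IsOpenImmersion jU ∧ IsOpenImmersion jV ∧
      jU ≫ X.str = U.str ∧ jV ≫ Y.str = V.str ∧
      PiecewiseIso U V ∧
      topologicalKrullDim ((Set.range jU.base)ᶜ : Set X.toScheme) < (n : WithBot ℕ∞) ∧
      topologicalKrullDim ((Set.range jV.base)ᶜ : Set Y.toScheme) < (n : WithBot ℕ∞) := by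
  obtain ⟨e, he⟩ := exists_matching n X Y hX hY h
  have hfin : Finite {x : X.toScheme // td X.str x = n} := (X.top_finite n hX).to_subtype
  choose P jX jY hoX hoY hs hmX hmY hrX hrY using fun x : {x : X.toScheme // td X.str x = n} =>
    pieces n X Y hX hY x.1 (e x).1 x.2 (e x).2 (he x)
  let U : X.toScheme.Opens := ⨆ x, (jX x).opensRange
  let V : Y.toScheme.Opens := ⨆ x, (jY x).opensRange
  have hUmem (z : X.toScheme) : z ∈ U ↔ ∃ x, z ∈ Set.range (jX x) := TopologicalSpace.Opens.mem_iSup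
  have hVmem (z : Y.toScheme) : z ∈ V ↔ ∃ x, z ∈ Set.range (jY x) := TopologicalSpace.Opens.mem_iSup
  have hU (x) : Set.range (jX x) ⊆ Set.range U.ι := by
    intro z hz
    rw [Scheme.Opens.range_ι]
    exact (hUmem z).2 ⟨x, hz⟩
  have hV (x) : Set.range (jY x) ⊆ Set.range V.ι := by
    intro z hz
    rw [Scheme.Opens.range_ι]
    exact (hVmem z).2 ⟨x, hz⟩
  have hιU (z : U.toScheme) : U.ι z ∈ U := by
    have : U.ι z ∈ Set.range U.ι := ⟨z, rfl⟩
    rwa [Scheme.Opens.range_ι] at this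
  have hιV (z : V.toScheme) : V.ι z ∈ V := by
    have : V.ι z ∈ Set.range V.ι := ⟨z, rfl⟩
    rwa [Scheme.Opens.range_ι] at this
  have hiU : IsOpenImmersion U.ι := inferInstance
  have hiV : IsOpenImmersion V.ι := inferInstance
  refine ⟨X.ofOpen U.ι, Y.ofOpen V.ι, U.ι, V.ι, hiU, hiV, rfl, rfl, ?_,
    compl_dim n X hX U fun x hx => (hUmem x).2 ⟨⟨x, hx⟩, hmX ⟨x, hx⟩⟩,
    compl_dim n Y hY V fun y hy => (hVmem y).2 ⟨e.symm ⟨y, hy⟩, by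
      have := hmY (e.symm ⟨y, hy⟩)
      rwa [e.apply_symm_apply] at this⟩⟩
  let t := (Finite.equivFin {x : X.toScheme // td X.str x = n}).symm
  let fU (i) : P (t i) ⟶ U.toScheme := IsOpenImmersion.lift U.ι (jX (t i)) (hU _)
  let fV (i) : P (t i) ⟶ V.toScheme := IsOpenImmersion.lift V.ι (jY (t i)) (hV _)
  refine ⟨Nat.card {x : X.toScheme // td X.str x = n}, fun i => X.ofOpen (jX (t i)),
    fun i => Y.ofOpen (jY (t i)),
    fU, fV, ?_, ?_, ?_, ?_, ?_, ?_, ?_, ?_, ?_⟩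
  · intro i
    have : IsOpenImmersion (IsOpenImmersion.lift U.ι (jX (t i)) (hU _)) := inferInstance
    exact (inferInstance : IsImmersion (IsOpenImmersion.lift U.ι (jX (t i)) (hU _)))
  · intro i
    have : IsOpenImmersion (IsOpenImmersion.lift V.ι (jY (t i)) (hV _)) := inferInstance
    exact (inferInstance : IsImmersion (IsOpenImmersion.lift V.ι (jY (t i)) (hV _)))
  · intro i
    change IsOpenImmersion.lift U.ι (jX (t i)) (hU _) ≫ U.ι ≫ X.str = jX (t i) ≫ X.str
    rw [IsOpenImmersion.lift_fac_assoc]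
  · intro i
    change IsOpenImmersion.lift V.ι (jY (t i)) (hV _) ≫ V.ι ≫ Y.str = jY (t i) ≫ Y.str
    rw [IsOpenImmersion.lift_fac_assoc]
  · intro i j hij
    change Disjoint (Set.range (IsOpenImmersion.lift U.ι (jX (t i)) (hU _)))
      (Set.range (IsOpenImmersion.lift U.ι (jX (t j)) (hU _)))
    rw [lift_range, lift_range]
    refine Disjoint.preimage _ (Disjoint.mono (hrX _) (hrX _) (onlyOn_disj _ _ ?_))
    exact fun h' => hij (t.injective (Subtype.ext h'))
  · intro i j hij
    change Disjoint (Set.range (IsOpenImmersion.lift V.ι (jY (t i)) (hV _)))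
      (Set.range (IsOpenImmersion.lift V.ι (jY (t j)) (hV _)))
    rw [lift_range, lift_range]
    refine Disjoint.preimage _ (Disjoint.mono (hrY _) (hrY _) (onlyOn_disj _ _ ?_))
    exact fun h' => hij (t.injective (e.injective (Subtype.ext h')))
  · change (⋃ i, Set.range (IsOpenImmersion.lift U.ι (jX (t i)) (hU _))) = Set.univ
    refine Set.eq_univ_of_forall fun z => Set.mem_iUnion.2 ?_
    obtain ⟨x, hx⟩ := (hUmem _).1 (hιU z)
    refine ⟨t.symm x, ?_⟩
    rw [lift_range, t.apply_symm_apply]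
    exact hx
  · change (⋃ i, Set.range (IsOpenImmersion.lift V.ι (jY (t i)) (hV _))) = Set.univ
    refine Set.eq_univ_of_forall fun z => Set.mem_iUnion.2 ?_
    obtain ⟨x, hx⟩ := (hVmem _).1 (hιV z)
    refine ⟨t.symm x, ?_⟩
    rw [lift_range, t.apply_symm_apply]
    exact hx
  · intro i
    refine ⟨Iso.refl _, ?_⟩
    change 𝟙 _ ≫ jY (t i) ≫ Y.str = jX (t i) ≫ X.str
    rw [Category.id_comp, hs]

end PartF

/-- If `[X] = [Y]` in `K_0(V_k^{(n,n-1)})` for varieties of dimension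
at most `n`, then one can write `X = U ⊎ X'` and `Y = V ⊎ Y'` with `U, V` open,
`U` and `V` piecewise isomorphic, and `dim X', dim Y' < n`. -/
theorem piecewise_iso_up_to_lower_dim (k : Type u) [Field k] (n : ℕ) (X Y : Variety k)
    (hX : X.dim ≤ (n : WithBot ℕ∞)) (hY : Y.dim ≤ (n : WithBot ℕ∞))
    (h : K0graded.cls n X hX = K0graded.cls n Y hY) :
    ∃ (U V : Variety k) (jU : U.toScheme ⟶ X.toScheme) (jV : V.toScheme ⟶ Y.toScheme),
      IsOpenImmersion jU ∧ IsOpenImmersion jV ∧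
      jU ≫ X.str = U.str ∧ jV ≫ Y.str = V.str ∧
      PiecewiseIso U V ∧
      topologicalKrullDim ((Set.range jU.base)ᶜ : Set X.toScheme) < (n : WithBot ℕ∞) ∧
      topologicalKrullDim ((Set.range jV.base)ᶜ : Set Y.toScheme) < (n : WithBot ℕ∞) := by
  exact main_aux n X Y hX hY h
end
end
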